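/- arXiv:2010.10040 — 3 statements merged into one kernel-verified Lean document; each statement's English description precedes it below -/
import Mathlib

section
/- Let g be a continuous Riemannian metric on the n-dimensional unit cube [0,1]ⁿ, and let d_i denote the infimum of g-lengths of Lipschitz curves joining the i-th pair of opposite faces. Then the g-volume ∫_{[0,1]ⁿ} √(det g) is at least d_1 · d_2 ⋯ d_n. -/
open MeasureTheory Matrix intervalIntegral

/-- The `g`-length of a curve `γ : ℝ → ℝⁿ` (restricted to `[0,1]`) with respect to a
Riemannian metric `g`, given pointwise by an `n × n` matrix. -/
noncomputable def gLength (n : ℕ) (g : (Fin n → ℝ) → Matrix (Fin n) (Fin n) ℝ)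
    (γ : ℝ → (Fin n → ℝ)) : ℝ :=
  ∫ t in (0:ℝ)..1, Real.sqrt ((deriv γ t) ⬝ᵥ (g (γ t)).mulVec (deriv γ t))

/-- `γ` is a Lipschitz curve in the unit cube `[0,1]ⁿ` joining the `i`-th pair of opposite
faces `{x : x i = 0}` and `{x : x i = 1}`. -/
def JoinsFaces (n : ℕ) (i : Fin n) (γ : ℝ → (Fin n → ℝ)) : Prop :=
  (∃ K : NNReal, LipschitzWith K γ) ∧
  (∀ t ∈ Set.Icc (0:ℝ) 1, γ t ∈ Set.Icc (0 : Fin n → ℝ) 1) ∧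
  γ 0 i = 0 ∧ γ 1 i = 1

/-! Let `dᵢ` be the infimum of lengths for the `i`-th pair of faces and `δᵢ` the `g`-distance to the
face `xᵢ = 0`, and put `fᵢ = min(dᵢ, δᵢ) / dᵢ`. Then `dᵢ fᵢ` has `g`-slope at most `1`, so the rows
of `diag(d) · Df` have `g`-norm at most `1`, and Hadamard's inequality gives
`d₁ ⋯ dₙ · det Df ≤ √(det g)` almost everywhere. Now `f` maps the cube to itself and preserves
its faces, hence `∫ det Df = 1`: with `u = f - id`, the integral `∫ det (1 + t Du)` is a polynomial
in `t`, and for small `t > 0` it is the volume of the cube, because `id + t u` is then a bijection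
preserving the cube. A polynomial that is constant near `0` is constant, so `t = 1` gives the
claim. -/

open Set Filter
open scoped Topology NNReal

section LinearAlgebra

variable {ι : Type*} [Fintype ι]

/-- The seminorm `v ↦ √(vᵀ G v)` attached to a positive semidefinite matrix `G`. -/
noncomputable def quadNorm (G : Matrix ι ι ℝ) (v : ι → ℝ) : ℝ :=
  √(v ⬝ᵥ G *ᵥ v)

theorem quadNorm_nonneg (G : Matrix ι ι ℝ) (v : ι → ℝ) : 0 ≤ quadNorm G v :=
  Real.sqrt_nonneg _

theorem quadNorm_smul (G : Matrix ι ι ℝ) (c : ℝ) (v : ι → ℝ) :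
    quadNorm G (c • v) = |c| * quadNorm G v := by
  have h : (c • v) ⬝ᵥ G *ᵥ (c • v) = c ^ 2 * (v ⬝ᵥ G *ᵥ v) := by
    simp only [mulVec_smul, smul_dotProduct, dotProduct_smul, smul_eq_mul]
    ring
  rw [quadNorm, quadNorm, h, Real.sqrt_mul (sq_nonneg c), Real.sqrt_sq_eq_abs]

theorem continuous_quadNorm :
    Continuous fun q : Matrix ι ι ℝ × (ι → ℝ) => quadNorm q.1 q.2 :=
  (continuous_snd.dotProduct (continuous_fst.matrix_mulVec continuous_snd)).sqrt

theorem quadNorm_le_sqrt_sum_abs_mul_norm (G : Matrix ι ι ℝ) (v : ι → ℝ) :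
    quadNorm G v ≤ √(∑ i, ∑ j, |G i j|) * ‖v‖ := by
  refine Real.sqrt_le_iff.2 ⟨by positivity, ?_⟩
  rw [mul_pow, Real.sq_sqrt (by positivity)]
  simp only [dotProduct, mulVec, Finset.mul_sum, Finset.sum_mul]
  refine Finset.sum_le_sum fun i _ => Finset.sum_le_sum fun j _ => ?_
  calc v i * (G i j * v j) ≤ |v i * (G i j * v j)| := le_abs_self _
    _ = |G i j| * (|v i| * |v j|) := by rw [abs_mul, abs_mul]; ring
    _ ≤ |G i j| * (‖v‖ * ‖v‖) := by
        gcongr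
        exacts [norm_le_pi_norm v i, norm_le_pi_norm v j]
    _ = |G i j| * ‖v‖ ^ 2 := by ring

theorem exists_quadNorm_le_mul_norm {X : Type*} [TopologicalSpace X] {g : X → Matrix ι ι ℝ}
    {k : Set X} (hk : IsCompact k) (hg : ContinuousOn g k) :
    ∃ C : ℝ≥0, ∀ p ∈ k, ∀ v, quadNorm (g p) v ≤ C * ‖v‖ := by
  have hcont : ContinuousOn (fun p => √(∑ i, ∑ j, |g p i j|)) k :=
    (Continuous.sqrt (by fun_prop : Continuous fun G : Matrix ι ι ℝ =>
      ∑ i, ∑ j, |G i j|)).comp_continuousOn hg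
  obtain ⟨C, hC⟩ := hk.exists_bound_of_continuousOn hcont
  refine ⟨C.toNNReal, fun p hp v => (quadNorm_le_sqrt_sum_abs_mul_norm _ v).trans ?_⟩
  gcongr
  exact (le_abs_self _).trans ((hC p hp).trans C.le_coe_toNNReal)

variable [DecidableEq ι]

theorem det_le_exp_trace_sub_card {M : Matrix ι ι ℝ} (hM : M.PosSemidef) :
    M.det ≤ Real.exp (M.trace - Fintype.card ι) := by
  have hdet : M.det = ∏ i, hM.1.eigenvalues i := by
    simpa using hM.1.det_eq_prod_eigenvalues
  have htrace : M.trace = ∑ i, hM.1.eigenvalues i := by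
    simpa using hM.1.trace_eq_sum_eigenvalues
  calc M.det = ∏ i, hM.1.eigenvalues i := hdet
    _ ≤ ∏ i, Real.exp (hM.1.eigenvalues i - 1) :=
        Finset.prod_le_prod (fun i _ => hM.eigenvalues_nonneg i) fun i _ => by
          linarith [Real.add_one_le_exp (hM.1.eigenvalues i - 1)]
    _ = Real.exp (M.trace - Fintype.card ι) := by
        rw [← Real.exp_sum, htrace]
        simp

theorem det_le_one_of_diag_le_one {M : Matrix ι ι ℝ} (hM : M.PosSemidef)
    (hdiag : ∀ i, M i i ≤ 1) : M.det ≤ 1 := by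
  have htrace : M.trace ≤ Fintype.card ι := by
    simpa [trace] using Finset.sum_le_sum fun i (_ : i ∈ Finset.univ) => hdiag i
  exact (det_le_exp_trace_sub_card hM).trans (Real.exp_le_one_iff.2 (sub_nonpos.2 htrace))

theorem dotProduct_inv_mulVec_le_one {G : Matrix ι ι ℝ} (hG : G.PosDef) {a : ι → ℝ}
    (ha : ∀ v, a ⬝ᵥ v ≤ quadNorm G v) : a ⬝ᵥ G⁻¹ *ᵥ a ≤ 1 := by
  have hGa : G *ᵥ G⁻¹ *ᵥ a = a := by
    rw [mulVec_mulVec, mul_nonsing_inv _ hG.det_pos.ne'.isUnit, one_mulVec]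
  have h := ha (G⁻¹ *ᵥ a)
  rw [quadNorm, hGa, dotProduct_comm (G⁻¹ *ᵥ a)] at h
  by_contra! hlt
  exact h.not_gt (Real.sqrt_lt_self_iff.2 hlt)

theorem abs_det_le_sqrt_det {A G : Matrix ι ι ℝ} (hG : G.PosSemidef)
    (h : ∀ i v, (A *ᵥ v) i ≤ quadNorm G v) : |A.det| ≤ √G.det := by
  by_cases hdet : G.det = 0
  · obtain ⟨v, hv, hGv⟩ := exists_mulVec_eq_zero_iff.2 hdet
    have hAv : A *ᵥ v = 0 := funext fun i => by
      have hpos := h i v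
      have hneg := h i (-v)
      simp only [quadNorm, mulVec_neg, hGv, dotProduct_zero, neg_zero, Real.sqrt_zero,
        Pi.neg_apply] at hpos hneg
      exact le_antisymm hpos (neg_nonpos.1 hneg)
    rw [exists_mulVec_eq_zero_iff.1 ⟨v, hv, hAv⟩, abs_zero]
    exact Real.sqrt_nonneg _
  · have hG' : G.PosDef := hG.posDef_iff_det_ne_zero.2 hdet
    have hM : (A * G⁻¹ * Aᵀ).PosSemidef := by
      simpa using hG'.inv.posSemidef.mul_mul_conjTranspose_same A
    have hdiag (i : ι) : (A * G⁻¹ * Aᵀ) i i ≤ 1 := by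
      rw [Matrix.mul_assoc]
      exact dotProduct_inv_mulVec_le_one hG' (h i)
    have hle := det_le_one_of_diag_le_one hM hdiag
    have hM_det : (A * G⁻¹ * Aᵀ).det = A.det ^ 2 / G.det := by
      rw [det_mul, det_mul, det_transpose, det_nonsing_inv, Ring.inverse_eq_inv']
      ring
    rw [hM_det, div_le_one hG'.det_pos] at hle
    exact Real.abs_le_sqrt hle

theorem prod_mul_det_le_sqrt_det {G : Matrix ι ι ℝ} (hG : G.PosSemidef)
    {A : (ι → ℝ) →L[ℝ] (ι → ℝ)} {d : ι → ℝ} (h : ∀ i v, d i * A v i ≤ quadNorm G v) :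
    (∏ i, d i) * A.det ≤ √G.det := by
  have hdet : (∏ i, d i) * A.det = (diagonal d * LinearMap.toMatrix' A.toLinearMap).det := by
    rw [det_mul, det_diagonal, LinearMap.det_toMatrix', ContinuousLinearMap.det]
  rw [hdet]
  refine (le_abs_self _).trans (abs_det_le_sqrt_det hG fun i v => ?_)
  rw [← mulVec_mulVec, LinearMap.toMatrix'_mulVec, mulVec_diagonal]
  exact h i v

end LinearAlgebra

section Degree

open Polynomial in
theorem exists_polynomial_eval_eq_integral {α : Type*} [MeasurableSpace α] {μ : Measure α}
    {P : α → ℝ[X]} {m : ℕ} (hdeg : ∀ x, (P x).natDegree ≤ m)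
    (hint : ∀ t, Integrable (fun x => (P x).eval t) μ) :
    ∃ q : ℝ[X], ∀ t, q.eval t = ∫ x, (P x).eval t ∂μ := by
  -- Interpolation at `m + 1` nodes commutes with the integral.
  have hinj : InjOn (Nat.cast : ℕ → ℝ) (Finset.range (m + 1)) := Nat.cast_injective.injOn
  have hP (x : α) :
      P x = Lagrange.interpolate (Finset.range (m + 1)) Nat.cast fun j => (P x).eval (j : ℝ) := by
    refine Lagrange.eq_interpolate hinj (degree_le_natDegree.trans_lt ?_)
    rw [Finset.card_range]
    exact_mod_cast Nat.lt_succ_of_le (hdeg x)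
  refine ⟨Lagrange.interpolate (Finset.range (m + 1)) Nat.cast
    fun j => ∫ x, (P x).eval (j : ℝ) ∂μ, fun t => ?_⟩
  have heval (x : α) : (P x).eval t = ∑ j ∈ Finset.range (m + 1),
      (P x).eval (j : ℝ) * (Lagrange.basis (Finset.range (m + 1)) Nat.cast j).eval t := by
    conv_lhs => rw [hP x]
    simp [Lagrange.interpolate_apply, eval_finsetSum]
  rw [integral_congr_ae (ae_of_all _ heval),
    MeasureTheory.integral_finsetSum _ fun (j : ℕ) _ => (hint j).mul_const _]
  simp [Lagrange.interpolate_apply, eval_finsetSum, MeasureTheory.integral_mul_const]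

open Polynomial in
theorem exists_polynomial_eval_eq_det_add_smul {R M : Type*} [CommRing R] [Nontrivial R]
    [AddCommGroup M] [Module R M] [Module.Free R M] [Module.Finite R M] (A B : M →ₗ[R] M) :
    ∃ p : R[X], p.natDegree ≤ Module.finrank R M ∧
      ∀ t : R, p.eval t = LinearMap.det (A + t • B) := by
  set b := Module.finBasis R M
  refine ⟨_, (natDegree_det_X_add_C_le (LinearMap.toMatrix b b B)
    (LinearMap.toMatrix b b A)).trans_eq (Fintype.card_fin _), fun t => ?_⟩
  rw [← coe_evalRingHom, RingHom.map_det, ← LinearMap.det_toMatrix b]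
  congr 1
  ext i j
  simp [add_comm, mul_comm t]

variable {E : Type*} [NormedAddCommGroup E] [NormedSpace ℝ E]

theorem bijective_id_add_of_lipschitzWith [CompleteSpace E] {u : E → E} {c : ℝ≥0}
    (hu : LipschitzWith c u) (hc : c < 1) : Function.Bijective fun x => x + u x := by
  have happ : ApproximatesLinearOn (fun x => x + u x)
      (ContinuousLinearEquiv.refl ℝ E : E →L[ℝ] E) univ c := by
    rw [ApproximatesLinearOn.approximatesLinearOn_iff_lipschitzOnWith, lipschitzOnWith_univ]
    convert hu using 1
    ext x
    simp
  have hc' : Subsingleton E ∨ c < ‖((ContinuousLinearEquiv.refl ℝ E).symm : E →L[ℝ] E)‖₊⁻¹ := by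
    refine (subsingleton_or_nontrivial E).imp_right fun (_ : Nontrivial E) => ?_
    have : ‖((ContinuousLinearEquiv.refl ℝ E).symm : E →L[ℝ] E)‖₊ = 1 :=
      NNReal.eq ContinuousLinearMap.norm_id
    rwa [this, inv_one]
  exact ⟨injOn_univ.1 (happ.injOn hc'), happ.surjective hc'⟩

theorem fderiv_id_add {u : E → E} {x : E} (hu : DifferentiableAt ℝ u x) :
    fderiv ℝ (fun y => y + u y) x = 1 + fderiv ℝ u x :=
  ((hasFDerivAt_id x).add hu.hasFDerivAt).fderiv

variable [FiniteDimensional ℝ E]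

theorem det_one_add_pos_of_norm_lt_one {A : E →L[ℝ] E} (hA : ‖A‖ < 1) : 0 < (1 + A).det := by
  have hne {B : E →L[ℝ] E} (hB : ‖B‖ < 1) : (1 + B).det ≠ 0 := by
    have hunit : IsUnit (1 + B) := by
      simpa using isUnit_one_sub_of_norm_lt_one (x := -B) (by rwa [norm_neg])
    exact ((LinearMap.isUnit_iff_isUnit_det _).1
      (hunit.map (ContinuousLinearMap.toLinearMapRingHom (R₁ := ℝ) (M₁ := E)))).ne_zero
  have hcont : Continuous fun B : E →L[ℝ] E => (1 + B).det :=
    ContinuousLinearMap.continuous_det.comp (continuous_const.add continuous_id)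
  by_contra! hle
  have hone : (1 + (0 : E →L[ℝ] E)).det = 1 := by simp [ContinuousLinearMap.det]
  obtain ⟨B, hB, hBdet⟩ := (convex_ball (0 : E →L[ℝ] E) 1).isPreconnected.intermediate_value
    (mem_ball_zero_iff.2 hA) (Metric.mem_ball_self one_pos) hcont.continuousOn
    (⟨hle, hone.symm ▸ zero_le_one⟩ : (0 : ℝ) ∈ Icc _ _)
  exact hne (mem_ball_zero_iff.1 hB) hBdet

variable [MeasurableSpace E] [BorelSpace E] {μ : Measure E} {s : Set E}

theorem integrableOn_comp_fderiv_of_lipschitzWith {u : E → E} {K : ℝ≥0} (hu : LipschitzWith K u)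
    (hs : μ s ≠ ⊤) {Φ : (E →L[ℝ] E) → ℝ} (hΦ : Continuous Φ) :
    IntegrableOn (fun x => Φ (fderiv ℝ u x)) s μ := by
  obtain ⟨C, hC⟩ := (isCompact_closedBall (0 : E →L[ℝ] E) K).exists_bound_of_continuousOn
    hΦ.continuousOn
  refine Measure.integrableOn_of_bounded (M := C) hs
    (hΦ.measurable.comp (measurable_fderiv ℝ u)).aestronglyMeasurable (ae_of_all _ fun x => hC _ ?_)
  simpa using norm_fderiv_le_of_lipschitz ℝ hu

variable [μ.IsAddHaarMeasure]

theorem ae_restrict_mem_nhds_of_convex (hs : Convex ℝ s) : ∀ᵐ x ∂μ.restrict s, s ∈ 𝓝 x := by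
  rw [← Measure.restrict_congr_set (interior_ae_eq_of_null_frontier (hs.addHaar_frontier μ))]
  filter_upwards [ae_restrict_mem isOpen_interior.measurableSet] with x hx
  exact mem_interior_iff_mem_nhds.1 hx

theorem addHaar_image_eq_zero_of_lipschitzWith {F : E → E} {K : ℝ≥0} (hF : LipschitzWith K F)
    (hs : μ s = 0) : μ (F '' s) = 0 := by
  have hausdorff_eq := Measure.isAddLeftInvariant_eq_smul
    (μH[Module.finrank ℝ E] : Measure E) μ
  have eq_hausdorff := Measure.isAddLeftInvariant_eq_smul
    μ (μH[Module.finrank ℝ E] : Measure E)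
  have hs' : μH[Module.finrank ℝ E] s = 0 := by
    rw [hausdorff_eq, Measure.smul_apply, hs, smul_zero]
  have himage : μH[Module.finrank ℝ E] (F '' s) = 0 := by
    have h := hF.hausdorffMeasure_image_le (Nat.cast_nonneg (Module.finrank ℝ E)) s
    rwa [hs', mul_zero, nonpos_iff_eq_zero] at h
  rw [eq_hausdorff, Measure.smul_apply, himage, smul_zero]

theorem setIntegral_abs_det_fderiv_eq_measureReal_image {F : E → E} {K : ℝ≥0}
    (hF : LipschitzWith K F) (hs : MeasurableSet s) (hinj : InjOn F s) :
    ∫ x in s, |(fderiv ℝ F x).det| ∂μ = μ.real (F '' s) := by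
  set D : Set E := {x | DifferentiableAt ℝ F x}
  have hDc : μ Dᶜ = 0 := hF.ae_differentiableAt
  have hdom : (s ∩ D : Set E) =ᵐ[μ] s := inter_ae_eq_left_of_ae_eq_univ (ae_eq_univ.2 hDc)
  have himage : F '' s =ᵐ[μ] F '' (s ∩ D) := by
    rw [← inter_union_compl s D, image_union, inter_union_compl]
    exact union_ae_eq_left_of_ae_eq_empty (ae_eq_empty.2 (measure_mono_null
      (image_mono inter_subset_right) (addHaar_image_eq_zero_of_lipschitzWith hF hDc)))
  have hcov := integral_image_eq_integral_abs_det_fderiv_smul μ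
    (hs.inter (measurableSet_of_differentiableAt ℝ F))
    (fun x hx => hx.2.hasFDerivAt.hasFDerivWithinAt) (hinj.mono inter_subset_left)
    fun _ => (1 : ℝ)
  rw [← setIntegral_congr_set hdom, measureReal_congr himage]
  simpa using hcov.symm

theorem setIntegral_det_one_add_fderiv_of_lipschitzWith_lt_one {u : E → E} {c : ℝ≥0}
    (hu : LipschitzWith c u) (hc : c < 1) (hs : MeasurableSet s)
    (hinv : ∀ x, x + u x ∈ s ↔ x ∈ s) :
    ∫ x in s, (1 + fderiv ℝ u x).det ∂μ = μ.real s := by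
  have hbij := bijective_id_add_of_lipschitzWith hu hc
  have himage : (fun x => x + u x) '' s = s := by
    have hpreimage : (fun x => x + u x) ⁻¹' s = s := ext hinv
    simpa only [hpreimage] using image_preimage_eq s hbij.surjective
  have hdet : ∀ᵐ x ∂μ, (1 + fderiv ℝ u x).det = |(fderiv ℝ (fun x => x + u x) x).det| := by
    filter_upwards [hu.ae_differentiableAt] with x hx
    have hlt : ‖fderiv ℝ u x‖ < 1 := (norm_fderiv_le_of_lipschitz ℝ hu).trans_lt hc
    rw [fderiv_id_add hx, abs_of_pos (det_one_add_pos_of_norm_lt_one hlt)]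
  calc ∫ x in s, (1 + fderiv ℝ u x).det ∂μ
      = ∫ x in s, |(fderiv ℝ (fun x => x + u x) x).det| ∂μ :=
        integral_congr_ae (ae_restrict_of_ae hdet)
    _ = μ.real ((fun x => x + u x) '' s) :=
        setIntegral_abs_det_fderiv_eq_measureReal_image (LipschitzWith.id.add hu) hs
          hbij.injective.injOn
    _ = μ.real s := by rw [himage]

theorem setIntegral_det_one_add_fderiv {u : E → E} {K : ℝ≥0} (hu : LipschitzWith K u)
    (hs : MeasurableSet s) (hμs : μ s ≠ ⊤)
    (hinv : ∀ t ∈ Ioo (0 : ℝ) 1, ∀ x, x + t • u x ∈ s ↔ x ∈ s) :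
    ∫ x in s, (1 + fderiv ℝ u x).det ∂μ = μ.real s := by
  choose p hdeg hp using fun x => exists_polynomial_eval_eq_det_add_smul 1
    (fderiv ℝ u x).toLinearMap
  have hp' (x : E) (t : ℝ) : (p x).eval t = (1 + t • fderiv ℝ u x).det := hp x t
  obtain ⟨q, hq⟩ := exists_polynomial_eval_eq_integral (μ := μ.restrict s) hdeg fun t => by
    simp_rw [hp']
    exact integrableOn_comp_fderiv_of_lipschitzWith hu hμs
      (ContinuousLinearMap.continuous_det.comp (continuous_const.add (continuous_const_smul t)))
  simp_rw [hp'] at hq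
  have hsmall : ∀ t ∈ Ioo 0 (1 / (K + 1) : ℝ), q.eval t = μ.real s := fun t ht => by
    have htK : t * (K + 1) < 1 := (lt_div_iff₀ (by positivity)).1 ht.2
    have htu : LipschitzWith (‖t‖₊ * K) (t • u) := (lipschitzWith_smul t).comp hu
    have hlt : ‖t‖₊ * K < 1 := by
      rw [← NNReal.coe_lt_coe, NNReal.coe_mul, coe_nnnorm, Real.norm_of_nonneg ht.1.le]
      push_cast
      linarith [ht.1]
    have ht1 : t < 1 := by nlinarith [ht.1, K.coe_nonneg]
    have h := setIntegral_det_one_add_fderiv_of_lipschitzWith_lt_one (μ := μ) htu hlt hs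
      (hinv t ⟨ht.1, ht1⟩)
    rw [fderiv_const_smul_field] at h
    exact (hq t).trans h
  have hconst : q = Polynomial.C (μ.real s) :=
    Polynomial.eq_of_infinite_eval_eq _ _ ((Ioo_infinite (by positivity : 0 < 1 / (K + 1 : ℝ))).mono
      fun t ht => (hsmall t ht).trans Polynomial.eval_C.symm)
  simpa [hconst] using (hq 1).symm

end Degree

section UnitCube

variable {ι : Type*}

/-- The coordinatewise nearest-point retraction of `ℝ^ι` onto the unit cube, used to extend maps
defined on the cube to the whole space. -/
noncomputable def cubeClamp (x : ι → ℝ) : ι → ℝ :=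
  fun i => projIcc (0 : ℝ) 1 zero_le_one (x i)

theorem cubeClamp_mem (x : ι → ℝ) : cubeClamp x ∈ Icc (0 : ι → ℝ) 1 :=
  ⟨fun i => (projIcc 0 1 zero_le_one (x i)).2.1, fun i => (projIcc 0 1 zero_le_one (x i)).2.2⟩

theorem cubeClamp_of_mem {x : ι → ℝ} (hx : x ∈ Icc (0 : ι → ℝ) 1) : cubeClamp x = x :=
  funext fun i => by rw [cubeClamp, projIcc_of_mem zero_le_one ⟨hx.1 i, hx.2 i⟩]

theorem mem_unitCube_of_add_smul_mem {u : (ι → ℝ) → ι → ℝ} (hlow : ∀ x i, x i ≤ 0 → u x i = 0)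
    (hhigh : ∀ x i, 1 ≤ x i → u x i = 0) {t : ℝ} {x : ι → ℝ}
    (hx : x + t • u x ∈ Icc (0 : ι → ℝ) 1) : x ∈ Icc (0 : ι → ℝ) 1 := by
  refine ⟨fun i => ?_, fun i => ?_⟩ <;> by_contra! hi
  · have h : 0 ≤ x i := by simpa [hlow x i hi.le] using hx.1 i
    exact h.not_gt hi
  · have h : x i ≤ 1 := by simpa [hhigh x i hi.le] using hx.2 i
    exact h.not_gt hi

variable [Fintype ι]

theorem lipschitzWith_cubeClamp : LipschitzWith 1 (cubeClamp : (ι → ℝ) → ι → ℝ) := by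
  refine LipschitzWith.mk_one fun x y => (dist_pi_le_iff dist_nonneg).2 fun i => ?_
  have h := (LipschitzWith.projIcc (zero_le_one' ℝ)).dist_le_mul (x i) (y i)
  rw [NNReal.coe_one, one_mul] at h
  exact h.trans (dist_le_pi_dist x y i)

theorem setIntegral_det_fderiv_unitCube_eq_one {f : (ι → ℝ) → ι → ℝ} {K : ℝ≥0}
    (hf : LipschitzOnWith K f (Icc 0 1)) (hmaps : MapsTo f (Icc 0 1) (Icc 0 1))
    (hlow : ∀ i, ∀ x ∈ Icc (0 : ι → ℝ) 1, x i = 0 → f x i = 0)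
    (hhigh : ∀ i, ∀ x ∈ Icc (0 : ι → ℝ) 1, x i = 1 → f x i = 1) :
    ∫ x in Icc (0 : ι → ℝ) 1, (fderiv ℝ f x).det = 1 := by
  set u : (ι → ℝ) → ι → ℝ := fun x => f (cubeClamp x) - cubeClamp x
  have hu : LipschitzWith (K * 1 + 1) u :=
    (lipschitzOnWith_univ.1 (hf.comp lipschitzWith_cubeClamp.lipschitzOnWith fun x _ =>
      cubeClamp_mem x)).sub lipschitzWith_cubeClamp
  have hu_cube {x : ι → ℝ} (hx : x ∈ Icc (0 : ι → ℝ) 1) : x + u x = f x := by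
    simp [u, cubeClamp_of_mem hx]
  have hu_low (x : ι → ℝ) (i : ι) (hi : x i ≤ 0) : u x i = 0 := by
    have hclamp : cubeClamp x i = 0 := by rw [cubeClamp, projIcc_of_le_left zero_le_one hi]
    simp [u, hlow i _ (cubeClamp_mem x) hclamp, hclamp]
  have hu_high (x : ι → ℝ) (i : ι) (hi : 1 ≤ x i) : u x i = 0 := by
    have hclamp : cubeClamp x i = 1 := by rw [cubeClamp, projIcc_of_right_le zero_le_one hi]
    simp [u, hhigh i _ (cubeClamp_mem x) hclamp, hclamp]
  have hinv (t : ℝ) (ht : t ∈ Ioo (0 : ℝ) 1) (x : ι → ℝ) :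
      x + t • u x ∈ Icc (0 : ι → ℝ) 1 ↔ x ∈ Icc (0 : ι → ℝ) 1 :=
    ⟨mem_unitCube_of_add_smul_mem hu_low hu_high, fun hx =>
      (convex_Icc 0 1).add_smul_mem hx (hu_cube hx ▸ hmaps hx) ⟨ht.1.le, ht.2.le⟩⟩
  have hfderiv : ∀ᵐ x ∂volume.restrict (Icc (0 : ι → ℝ) 1),
      (fderiv ℝ f x).det = (1 + fderiv ℝ u x).det := by
    filter_upwards [ae_restrict_of_ae hu.ae_differentiableAt,
      ae_restrict_mem_nhds_of_convex (convex_Icc (0 : ι → ℝ) 1)] with x hdiff hx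
    have heq : f =ᶠ[𝓝 x] fun y => y + u y := by
      filter_upwards [hx] with y hy using (hu_cube hy).symm
    rw [heq.fderiv_eq, fderiv_id_add hdiff]
  rw [integral_congr_ae hfderiv, setIntegral_det_one_add_fderiv hu measurableSet_Icc
    isCompact_Icc.measure_ne_top hinv]
  simp [Measure.real, Real.volume_Icc_pi]

end UnitCube

section Curves

variable {E : Type*} [NormedAddCommGroup E] {s : Set E} {x y z : E} {γ₁ γ₂ : ℝ → E} {T T₁ T₂ : ℝ}

/-- `γ`, restricted to `[0, T]`, is a curve in `s` from `x` to `y`. It is required to be Lipschitz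
on all of `ℝ`, as in `JoinsFaces`. -/
structure IsLipschitzCurve (s : Set E) (x y : E) (T : ℝ) (γ : ℝ → E) : Prop where
  nonneg : 0 ≤ T
  lipschitz : ∃ K : ℝ≥0, LipschitzWith K γ
  mapsTo : MapsTo γ (Icc 0 T) s
  source : γ 0 = x
  target : γ T = y

theorem isLipschitzCurve_const (hx : x ∈ s) : IsLipschitzCurve s x x 0 fun _ => x where
  nonneg := le_rfl
  lipschitz := ⟨0, LipschitzWith.const x⟩
  mapsTo _ _ := hx
  source := rfl
  target := rfl

/-- The concatenation of `γ₁`, run over `[0, T]`, with `γ₂`, whose time is shifted by `T`. The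
formula is visibly Lipschitz, and is the concatenation when `γ₁ T = γ₂ 0`. -/
noncomputable def concatCurve (T : ℝ) (γ₁ γ₂ : ℝ → E) (t : ℝ) : E :=
  γ₁ (min t T) + (γ₂ (max 0 (t - T)) - γ₂ 0)

theorem concatCurve_of_le {t : ℝ} (ht : t ≤ T) : concatCurve T γ₁ γ₂ t = γ₁ t := by
  simp [concatCurve, min_eq_left ht, max_eq_left (sub_nonpos.2 ht)]

theorem concatCurve_of_ge (h : γ₁ T = γ₂ 0) {t : ℝ} (ht : T ≤ t) :
    concatCurve T γ₁ γ₂ t = γ₂ (t - T) := by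
  simp [concatCurve, min_eq_right ht, max_eq_right (sub_nonneg.2 ht), h]

theorem IsLipschitzCurve.concat (h₁ : IsLipschitzCurve s x y T₁ γ₁)
    (h₂ : IsLipschitzCurve s y z T₂ γ₂) :
    IsLipschitzCurve s x z (T₁ + T₂) (concatCurve T₁ γ₁ γ₂) where
  nonneg := add_nonneg h₁.nonneg h₂.nonneg
  lipschitz := by
    obtain ⟨K₁, hK₁⟩ := h₁.lipschitz
    obtain ⟨K₂, hK₂⟩ := h₂.lipschitz
    exact ⟨_, (hK₁.comp (LipschitzWith.id.min_const T₁)).add ((hK₂.comp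
      ((LipschitzWith.id.sub (LipschitzWith.const T₁)).const_max 0)).sub
      (LipschitzWith.const (γ₂ 0)))⟩
  mapsTo t ht := by
    rcases le_total t T₁ with htT | htT
    · rw [concatCurve_of_le htT]
      exact h₁.mapsTo ⟨ht.1, htT⟩
    · rw [concatCurve_of_ge (h₁.target.trans h₂.source.symm) htT]
      exact h₂.mapsTo ⟨sub_nonneg.2 htT, sub_le_iff_le_add'.2 ht.2⟩
  source := by rw [concatCurve_of_le h₁.nonneg, h₁.source]
  target := by
    rw [concatCurve_of_ge (h₁.target.trans h₂.source.symm) (le_add_of_nonneg_right h₂.nonneg),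
      add_sub_cancel_left, h₂.target]

theorem isLipschitzCurve_lineMap [NormedSpace ℝ E] (hs : Convex ℝ s) (hx : x ∈ s) (hy : y ∈ s) :
    IsLipschitzCurve s x y 1 (AffineMap.lineMap x y) where
  nonneg := zero_le_one
  lipschitz := ⟨_, lipschitzWith_lineMap x y⟩
  mapsTo _ ht := hs.lineMap_mem hx hy ht
  source := AffineMap.lineMap_apply_zero x y
  target := AffineMap.lineMap_apply_one x y

end Curves

section Length

variable {ι : Type*} [Fintype ι] {g : (ι → ℝ) → Matrix ι ι ℝ} {s F : Set (ι → ℝ)}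
  {x y z : ι → ℝ} {γ γ₁ γ₂ : ℝ → ι → ℝ} {a b c T T₁ T₂ : ℝ}

/-- The `g`-length of the curve `γ` over the parameter interval `[a, b]`. -/
noncomputable def curveLength (g : (ι → ℝ) → Matrix ι ι ℝ) (γ : ℝ → ι → ℝ) (a b : ℝ) : ℝ :=
  ∫ t in a..b, quadNorm (g (γ t)) (deriv γ t)

theorem curveLength_nonneg (hab : a ≤ b) : 0 ≤ curveLength g γ a b :=
  intervalIntegral.integral_nonneg hab fun _ _ => quadNorm_nonneg _ _

theorem curveLength_congr (hab : a ≤ b) (h : EqOn γ₁ γ₂ (Ioo a b)) :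
    curveLength g γ₁ a b = curveLength g γ₂ a b := by
  refine intervalIntegral.integral_congr_uIoo fun t ht => ?_
  rw [uIoo_of_le hab] at ht
  simp only [h ht, h.deriv isOpen_Ioo ht]

theorem curveLength_comp_sub_const (c : ℝ) :
    curveLength g (fun t => γ (t - c)) a b = curveLength g γ (a - c) (b - c) := by
  simp only [curveLength, deriv_comp_sub_const]
  exact intervalIntegral.integral_comp_sub_right (fun t => quadNorm (g (γ t)) (deriv γ t)) c

theorem curveLength_comp_mul_left (hc : 0 ≤ c) :
    curveLength g (fun t => γ (c * t)) a b = curveLength g γ (c * a) (c * b) := by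
  simp only [curveLength, deriv_comp_mul_left, quadNorm_smul, abs_of_nonneg hc,
    intervalIntegral.integral_const_mul]
  exact intervalIntegral.smul_integral_comp_mul_left (fun t => quadNorm (g (γ t)) (deriv γ t)) c

theorem intervalIntegrable_quadNorm_deriv {K : ℝ≥0} (hg : ContinuousOn g s)
    (hγ : LipschitzWith K γ) (hmaps : MapsTo γ (uIcc a b) s) :
    IntervalIntegrable (fun t => quadNorm (g (γ t)) (deriv γ t)) volume a b := by
  have : TopologicalSpace.PseudoMetrizableSpace (Matrix ι ι ℝ) :=
    inferInstanceAs (TopologicalSpace.PseudoMetrizableSpace (ι → ι → ℝ))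
  have hgγ : ContinuousOn (fun t => g (γ t)) (uIcc a b) := hg.comp hγ.continuous.continuousOn hmaps
  obtain ⟨C, hC⟩ := exists_quadNorm_le_mul_norm isCompact_uIcc hgγ
  refine (IntegrableOn.of_bound isCompact_uIcc.measure_lt_top ?_ (C * K) ?_).intervalIntegrable
  · exact continuous_quadNorm.comp_aestronglyMeasurable
      ((hgγ.aestronglyMeasurable measurableSet_uIcc).prodMk
        (measurable_deriv γ).aestronglyMeasurable)
  · filter_upwards [ae_restrict_mem measurableSet_uIcc] with t ht
    rw [Real.norm_of_nonneg (quadNorm_nonneg _ _)]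
    exact (hC t ht _).trans (by gcongr; exact norm_deriv_le_of_lipschitz hγ)

theorem curveLength_add {K : ℝ≥0} (hg : ContinuousOn g s) (hγ : LipschitzWith K γ) (hab : a ≤ b)
    (hbc : b ≤ c) (hmaps : MapsTo γ (Icc a c) s) :
    curveLength g γ a b + curveLength g γ b c = curveLength g γ a c := by
  refine intervalIntegral.integral_add_adjacent_intervals
    (intervalIntegrable_quadNorm_deriv hg hγ (hmaps.mono_left ?_))
    (intervalIntegrable_quadNorm_deriv hg hγ (hmaps.mono_left ?_))
  · rw [uIcc_of_le hab]
    exact Icc_subset_Icc_right hbc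
  · rw [uIcc_of_le hbc]
    exact Icc_subset_Icc_left hab

/-- The `g`-length of the straight segment from `x` to `y`. -/
noncomputable def segmentLength (g : (ι → ℝ) → Matrix ι ι ℝ) (x y : ι → ℝ) : ℝ :=
  curveLength g (AffineMap.lineMap x y) 0 1

theorem segmentLength_nonneg (g : (ι → ℝ) → Matrix ι ι ℝ) (x y : ι → ℝ) :
    0 ≤ segmentLength g x y :=
  curveLength_nonneg zero_le_one

theorem segmentLength_le
    (h : ∀ t ∈ Icc (0 : ℝ) 1, quadNorm (g (AffineMap.lineMap x y t)) (y - x) ≤ c) :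
    segmentLength g x y ≤ c := by
  have hbound : ‖segmentLength g x y‖ ≤ c * |1 - 0| := by
    refine intervalIntegral.norm_integral_le_of_norm_le_const fun t ht => ?_
    rw [uIoc_of_le zero_le_one] at ht
    rw [Real.norm_of_nonneg (quadNorm_nonneg _ _), AffineMap.hasDerivAt_lineMap.deriv]
    exact h t (Ioc_subset_Icc_self ht)
  simpa using (le_abs_self _).trans hbound

theorem IsLipschitzCurve.curveLength_concat (hg : ContinuousOn g s)
    (h₁ : IsLipschitzCurve s x y T₁ γ₁) (h₂ : IsLipschitzCurve s y z T₂ γ₂) :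
    curveLength g (concatCurve T₁ γ₁ γ₂) 0 (T₁ + T₂) =
      curveLength g γ₁ 0 T₁ + curveLength g γ₂ 0 T₂ := by
  obtain ⟨K, hK⟩ := (h₁.concat h₂).lipschitz
  have hle : T₁ ≤ T₁ + T₂ := le_add_of_nonneg_right h₂.nonneg
  have hfst : EqOn (concatCurve T₁ γ₁ γ₂) γ₁ (Ioo 0 T₁) := fun t ht => concatCurve_of_le ht.2.le
  have hsnd : EqOn (concatCurve T₁ γ₁ γ₂) (fun t => γ₂ (t - T₁)) (Ioo T₁ (T₁ + T₂)) :=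
    fun t ht => concatCurve_of_ge (h₁.target.trans h₂.source.symm) ht.1.le
  rw [← curveLength_add hg hK h₁.nonneg hle (h₁.concat h₂).mapsTo,
    curveLength_congr h₁.nonneg hfst, curveLength_congr hle hsnd, curveLength_comp_sub_const,
    sub_self, add_sub_cancel_left]

/-- The `g`-distance from the set `F` to the point `x` inside `s`. Being an infimum of reals, it is
`0` when no Lipschitz curve in `s` joins `F` to `x`. -/
noncomputable def lengthDist (g : (ι → ℝ) → Matrix ι ι ℝ) (s F : Set (ι → ℝ)) (x : ι → ℝ) : ℝ :=
  sInf {L | ∃ y ∈ F, ∃ T γ, IsLipschitzCurve s y x T γ ∧ L = curveLength g γ 0 T}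

theorem lengthDist_nonneg : 0 ≤ lengthDist g s F x := by
  refine Real.sInf_nonneg ?_
  rintro _ ⟨y, -, T, γ, h, rfl⟩
  exact curveLength_nonneg h.nonneg

theorem IsLipschitzCurve.lengthDist_le (h : IsLipschitzCurve s y x T γ) (hy : y ∈ F) :
    lengthDist g s F x ≤ curveLength g γ 0 T := by
  refine csInf_le ⟨0, ?_⟩ ⟨y, hy, T, γ, h, rfl⟩
  rintro _ ⟨y, -, T, γ, h, rfl⟩
  exact curveLength_nonneg h.nonneg

theorem le_lengthDist (hs : Convex ℝ s) (hF : (F ∩ s).Nonempty) (hx : x ∈ s)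
    (h : ∀ y ∈ F, ∀ T γ, IsLipschitzCurve s y x T γ → c ≤ curveLength g γ 0 T) :
    c ≤ lengthDist g s F x := by
  obtain ⟨y, hyF, hys⟩ := hF
  refine le_csInf ⟨_, y, hyF, 1, _, isLipschitzCurve_lineMap hs hys hx, rfl⟩ ?_
  rintro _ ⟨z, hz, T, γ, hγ, rfl⟩
  exact h z hz T γ hγ

theorem lengthDist_eq_zero (hx : x ∈ F ∩ s) : lengthDist g s F x = 0 :=
  le_antisymm (((isLipschitzCurve_const hx.2).lengthDist_le hx.1).trans_eq
    intervalIntegral.integral_same) lengthDist_nonneg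

theorem lengthDist_le_add_segmentLength (hg : ContinuousOn g s) (hs : Convex ℝ s)
    (hF : (F ∩ s).Nonempty) (hx : x ∈ s) (hy : y ∈ s) :
    lengthDist g s F y ≤ lengthDist g s F x + segmentLength g x y := by
  rw [← sub_le_iff_le_add]
  refine le_lengthDist hs hF hx fun z hz T γ hγ => sub_le_iff_le_add.2 ?_
  have hseg := isLipschitzCurve_lineMap hs hx hy
  calc lengthDist g s F y ≤ curveLength g (concatCurve T γ (AffineMap.lineMap x y)) 0 (T + 1) :=
        (hγ.concat hseg).lengthDist_le hz
    _ = curveLength g γ 0 T + segmentLength g x y := hγ.curveLength_concat hg hseg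

end Length

section Nonexpanding

variable {ι : Type*} [Fintype ι] {g : (ι → ℝ) → Matrix ι ι ℝ} {s : Set (ι → ℝ)}
  {φ : (ι → ℝ) → ℝ}

/-- A function on `s` that increases along any segment by at most the `g`-length of the segment;
this is the integrated form of the slope condition `dφ v ≤ √(vᵀ g v)`. -/
def IsNonexpanding (g : (ι → ℝ) → Matrix ι ι ℝ) (s : Set (ι → ℝ)) (φ : (ι → ℝ) → ℝ) : Prop :=
  ∀ x ∈ s, ∀ y ∈ s, φ y ≤ φ x + segmentLength g x y

theorem isNonexpanding_lengthDist {F : Set (ι → ℝ)} (hg : ContinuousOn g s) (hs : Convex ℝ s)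
    (hF : (F ∩ s).Nonempty) : IsNonexpanding g s (lengthDist g s F) :=
  fun _ hx _ hy => lengthDist_le_add_segmentLength hg hs hF hx hy

theorem IsNonexpanding.const_min (hφ : IsNonexpanding g s φ) (c : ℝ) :
    IsNonexpanding g s fun x => min c (φ x) := fun x hx y hy => by
  rw [← min_add_add_right]
  exact min_le_min (le_add_of_nonneg_right (segmentLength_nonneg g x y)) (hφ x hx y hy)

theorem IsNonexpanding.exists_lipschitzOnWith (hφ : IsNonexpanding g s φ) (hg : ContinuousOn g s)
    (hs : Convex ℝ s) (hs' : IsCompact s) : ∃ K, LipschitzOnWith K φ s := by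
  obtain ⟨C, hC⟩ := exists_quadNorm_le_mul_norm hs' hg
  refine ⟨C, LipschitzOnWith.of_le_add_mul C fun x hx y hy => (hφ y hy x hx).trans ?_⟩
  gcongr
  rw [dist_eq_norm]
  exact segmentLength_le fun t ht => hC _ (hs.lineMap_mem hy hx ht) _

theorem IsNonexpanding.hasFDerivAt_apply_le (hφ : IsNonexpanding g s φ) {x : ι → ℝ}
    (hx : s ∈ 𝓝 x) (hg : ContinuousAt g x) {φ' : (ι → ℝ) →L[ℝ] ℝ} (hφ' : HasFDerivAt φ φ' x)
    (v : ι → ℝ) : φ' v ≤ quadNorm (g x) v := by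
  refine le_of_forall_gt_imp_ge_of_dense fun c hc => ?_
  have hcont : ContinuousAt (fun p => quadNorm (g p) v) x :=
    continuous_quadNorm.continuousAt.comp (hg.prodMk continuousAt_const)
  obtain ⟨ε, hε, hball⟩ := Metric.eventually_nhds_iff_ball.1
    (Eventually.and hx (hcont.eventually_lt_const hc))
  have hline : Tendsto (fun t : ℝ => x + t • v) (𝓝[>] 0) (𝓝 x) := by
    have hcont : Continuous fun t : ℝ => x + t • v := by fun_prop
    simpa using (hcont.tendsto 0).mono_left nhdsWithin_le_nhds
  refine le_of_tendsto (hφ'.hasLineDerivAt v).tendsto_slope_zero_right ?_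
  filter_upwards [self_mem_nhdsWithin, hline (Metric.ball_mem_nhds x hε)] with t ht htball
  have ht : 0 < t := ht
  have hle : φ (x + t • v) ≤ φ x + t * c := by
    refine (hφ x (hball x (Metric.mem_ball_self hε)).1 _ (hball _ htball).1).trans ?_
    gcongr
    refine segmentLength_le fun r hr => ?_
    rw [add_sub_cancel_left, quadNorm_smul, abs_of_pos ht]
    gcongr
    exact (hball _ ((convex_ball x ε).lineMap_mem (Metric.mem_ball_self hε) htball hr)).2.le
  rw [smul_eq_mul, inv_mul_le_iff₀ ht]
  linarith

theorem exists_lipschitzOnWith_pi {α : Type*} [PseudoMetricSpace α] {k : Set α} {f : α → ι → ℝ}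
    (hf : ∀ i, ∃ K, LipschitzOnWith K (fun x => f x i) k) : ∃ K, LipschitzOnWith K f k := by
  choose K hK using hf
  refine ⟨∑ i, K i, LipschitzOnWith.of_dist_le_mul fun x hx y hy => ?_⟩
  refine (dist_pi_le_iff (by positivity)).2 fun i => ((hK i).dist_le_mul x hx y hy).trans ?_
  gcongr
  exact Finset.single_le_sum (f := K) (fun _ _ => zero_le) (Finset.mem_univ i)

end Nonexpanding

section Besicovitch

theorem prod_le_integral_sqrt_det_of_isNonexpanding {ι : Type*} [Fintype ι] [DecidableEq ι]
    {g : (ι → ℝ) → Matrix ι ι ℝ} (hg : ContinuousOn g (Icc 0 1))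
    (hpsd : ∀ p ∈ Icc (0 : ι → ℝ) 1, (g p).PosSemidef) {d : ι → ℝ} (hd : ∀ i, d i ≠ 0)
    {f : (ι → ℝ) → ι → ℝ} (hmaps : MapsTo f (Icc 0 1) (Icc 0 1))
    (hlow : ∀ i, ∀ x ∈ Icc (0 : ι → ℝ) 1, x i = 0 → f x i = 0)
    (hhigh : ∀ i, ∀ x ∈ Icc (0 : ι → ℝ) 1, x i = 1 → f x i = 1)
    (hf : ∀ i, IsNonexpanding g (Icc 0 1) fun x => d i * f x i) :
    ∏ i, d i ≤ ∫ p in Icc (0 : ι → ℝ) 1, √(g p).det := by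
  have hcube : Convex ℝ (Icc (0 : ι → ℝ) 1) := convex_Icc 0 1
  obtain ⟨K, hK⟩ : ∃ K, LipschitzOnWith K f (Icc 0 1) := exists_lipschitzOnWith_pi fun i => by
    obtain ⟨K, hK⟩ := (hf i).exists_lipschitzOnWith hg hcube isCompact_Icc
    refine ⟨‖(d i)⁻¹‖₊ * K, ?_⟩
    simpa [Function.comp_def, hd i] using (lipschitzWith_smul (d i)⁻¹).comp_lipschitzOnWith hK
  have hdegree := setIntegral_det_fderiv_unitCube_eq_one hK hmaps hlow hhigh
  have hint : IntegrableOn (fun x => (fderiv ℝ f x).det) (Icc 0 1) :=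
    Integrable.of_integral_ne_zero (hdegree ▸ one_ne_zero)
  have hsqrt : IntegrableOn (fun p => √(g p).det) (Icc 0 1) :=
    ((Continuous.matrix_det continuous_id).sqrt.comp_continuousOn hg).integrableOn_compact
      isCompact_Icc
  have hbound : ∀ᵐ x ∂volume.restrict (Icc (0 : ι → ℝ) 1),
      (∏ i, d i) * (fderiv ℝ f x).det ≤ √(g x).det := by
    filter_upwards [hK.ae_differentiableWithinAt measurableSet_Icc,
      ae_restrict_mem_nhds_of_convex hcube] with x hdiff hx
    refine prod_mul_det_le_sqrt_det (hpsd x (mem_of_mem_nhds hx)) fun i v => ?_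
    have hfi := (hasFDerivAt_pi'.1 (hdiff.differentiableAt hx).hasFDerivAt i).const_mul (d i)
    exact (hf i).hasFDerivAt_apply_le hx (hg.continuousAt hx) hfi v
  calc ∏ i, d i = ∫ x in Icc (0 : ι → ℝ) 1, (∏ i, d i) * (fderiv ℝ f x).det := by
        rw [MeasureTheory.integral_const_mul, hdegree, mul_one]
    _ ≤ ∫ p in Icc (0 : ι → ℝ) 1, √(g p).det := integral_mono_ae (hint.const_mul _) hsqrt hbound

/-- The infimum of `g`-lengths of Lipschitz curves joining the `i`-th pair of opposite faces of the
cube, which Besicovitch's inequality multiplies over `i`. -/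
noncomputable def faceSeparation {n : ℕ} (g : (Fin n → ℝ) → Matrix (Fin n) (Fin n) ℝ)
    (i : Fin n) : ℝ :=
  sInf {L : ℝ | ∃ γ : ℝ → (Fin n → ℝ), JoinsFaces n i γ ∧ L = gLength n g γ}

variable {n : ℕ} {g : (Fin n → ℝ) → Matrix (Fin n) (Fin n) ℝ} {i : Fin n} {x y : Fin n → ℝ}
  {γ : ℝ → Fin n → ℝ} {T : ℝ}

theorem gLength_eq_curveLength : gLength n g γ = curveLength g γ 0 1 := rfl

theorem faceSeparation_nonneg : 0 ≤ faceSeparation g i := by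
  refine Real.sInf_nonneg ?_
  rintro _ ⟨γ, -, rfl⟩
  exact curveLength_nonneg zero_le_one

theorem faceSeparation_le_gLength (h : JoinsFaces n i γ) : faceSeparation g i ≤ gLength n g γ := by
  refine csInf_le ⟨0, ?_⟩ ⟨γ, h, rfl⟩
  rintro _ ⟨γ, -, rfl⟩
  exact curveLength_nonneg zero_le_one

theorem IsLipschitzCurve.joinsFaces (h : IsLipschitzCurve (Icc 0 1) x y T γ) (hx : x i = 0)
    (hy : y i = 1) : JoinsFaces n i fun t => γ (T * t) := by
  obtain ⟨K, hK⟩ := h.lipschitz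
  refine ⟨⟨_, hK.comp (lipschitzWith_smul T)⟩, fun t ht => ?_, ?_, ?_⟩
  · exact h.mapsTo ⟨mul_nonneg h.nonneg ht.1, mul_le_of_le_one_right h.nonneg ht.2⟩
  · simp only [mul_zero, h.source, hx]
  · simp only [mul_one, h.target, hy]

theorem faceSeparation_le_lengthDist (hx : x ∈ Icc 0 1) (hxi : x i = 1) :
    faceSeparation g i ≤ lengthDist g (Icc 0 1) {z | z i = 0} x := by
  refine le_lengthDist (convex_Icc 0 1) ⟨0, by simp⟩ hx fun y hy T γ h => ?_
  calc faceSeparation g i ≤ gLength n g fun t => γ (T * t) :=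
        faceSeparation_le_gLength (h.joinsFaces hy hxi)
    _ = curveLength g γ 0 T := by
        rw [gLength_eq_curveLength, curveLength_comp_mul_left h.nonneg, mul_zero, mul_one]

theorem prod_faceSeparation_le_integral_sqrt_det (hg : ContinuousOn g (Icc 0 1))
    (hpsd : ∀ p ∈ Icc (0 : Fin n → ℝ) 1, (g p).PosSemidef) (hpos : ∀ i, 0 < faceSeparation g i) :
    ∏ i, faceSeparation g i ≤ ∫ p in Icc (0 : Fin n → ℝ) 1, √(g p).det := by
  set d : Fin n → ℝ := faceSeparation g
  set δ : Fin n → (Fin n → ℝ) → ℝ := fun i => lengthDist g (Icc 0 1) {z | z i = 0}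
  have hδ (i : Fin n) : IsNonexpanding g (Icc 0 1) (δ i) :=
    isNonexpanding_lengthDist hg (convex_Icc 0 1) ⟨0, by simp⟩
  have hlow (i : Fin n) (x : Fin n → ℝ) (hx : x ∈ Icc 0 1) (hxi : x i = 0) : δ i x = 0 :=
    lengthDist_eq_zero ⟨hxi, hx⟩
  have hhigh (i : Fin n) (x : Fin n → ℝ) (hx : x ∈ Icc 0 1) (hxi : x i = 1) : d i ≤ δ i x :=
    faceSeparation_le_lengthDist hx hxi
  refine prod_le_integral_sqrt_det_of_isNonexpanding hg hpsd (fun i => (hpos i).ne')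
    (f := fun x i => min (d i) (δ i x) / d i) (fun x _ => ⟨fun i => ?_, fun i => ?_⟩)
    (fun i x hx hxi => ?_) (fun i x hx hxi => ?_) fun i => ?_
  · exact div_nonneg (le_min (hpos i).le lengthDist_nonneg) (hpos i).le
  · exact (div_le_one (hpos i)).2 (min_le_left _ _)
  · simp only [hlow i x hx hxi, min_eq_right (hpos i).le, zero_div]
  · simp only [min_eq_left (hhigh i x hx hxi), div_self (hpos i).ne']
  · simpa only [mul_div_cancel₀ _ (hpos i).ne'] using (hδ i).const_min (d i)

theorem besicovitch_inequality_general
    (n : ℕ) (g : (Fin n → ℝ) → Matrix (Fin n) (Fin n) ℝ)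
    (hg_cont : ContinuousOn g (Set.Icc 0 1))
    (hg_psd : ∀ p ∈ Set.Icc (0 : Fin n → ℝ) 1, (g p).PosSemidef) :
    (∏ i : Fin n, sInf {L : ℝ | ∃ γ : ℝ → (Fin n → ℝ), JoinsFaces n i γ ∧ L = gLength n g γ})
      ≤ ∫ p in Set.Icc (0 : Fin n → ℝ) 1, Real.sqrt (g p).det := by
  change ∏ i, faceSeparation g i ≤ _
  by_cases hpos : ∀ i, 0 < faceSeparation g i
  · exact prod_faceSeparation_le_integral_sqrt_det hg_cont hg_psd hpos
  · obtain ⟨i, hi⟩ := not_forall.1 hpos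
    rw [Finset.prod_eq_zero (Finset.mem_univ i) (faceSeparation_nonneg.antisymm' (not_lt.1 hi))]
    exact integral_nonneg fun _ => Real.sqrt_nonneg _

end Besicovitch

/-- **Besicovitch inequality.** Let `g` be a continuous Riemannian metric on the unit cube
`[0,1]ⁿ`, and let `d i` be the infimum of `g`-lengths of Lipschitz curves joining the `i`-th
pair of opposite faces. Then the `g`-volume `∫_{[0,1]ⁿ} √(det g)` is at least `d 1 ⋯ d n`. -/
theorem besicovitch_inequality
    (n : ℕ) (g : (Fin n → ℝ) → Matrix (Fin n) (Fin n) ℝ)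
    (hg_cont : Continuous g)
    (hg_posdef : ∀ p, (g p).PosDef) :
    (∏ i : Fin n, sInf {L : ℝ | ∃ γ : ℝ → (Fin n → ℝ), JoinsFaces n i γ ∧ L = gLength n g γ})
      ≤ ∫ p in Set.Icc (0 : Fin n → ℝ) 1, Real.sqrt (g p).det :=
  besicovitch_inequality_general n g hg_cont.continuousOn fun p _ => (hg_posdef p).posSemidef
end

section
/- Let f : ℝⁿ → ℝ be a 1-Lipschitz function and A ⊆ ℝⁿ a Borel set. Then the n-dimensional Lebesgue measure of A is at least ∫_{ℝ} μ_{n−1}(A ∩ f⁻¹{x}) dx, where μ_{n−1} = (ω_{n−1}/2^{n−1}) · H^{n−1} is the normalized (n−1)-dimensional Hausdorff measure. -/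
open MeasureTheory

/-!
Assign to a set `S` the gauge `(largest diameter of a fiber of f in S) ^ (n - 1) * |f(S)|`. By
Fatou's lemma, the outer measure that Carathéodory's construction builds from this gauge dominates
the integral of the Hausdorff measures of the fibers, so it suffices to compare it with the Lebesgue
measure. At a point of differentiability, blow up `f` on a cylinder with axis along the gradient
whose height equals the diameter of its base: for the limiting linear function, the gauge of the
cylinder is at most `K * 2 ^ (n - 1) / ω_{n-1}` times its volume, `K` being the Lipschitz constant.
By Rademacher's theorem and Vitali's covering theorem such cylinders fill an open set up to a null
set, and null sets are negligible for the gauge by Eilenberg's inequality, as the gauge of `S` is at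
most `K * diam S ^ n`.
-/

open Filter Metric Module Set Topology
open scoped ENNReal NNReal Pointwise RealInnerProductSpace

section CaratheodoryConstruction

variable {X : Type*} [EMetricSpace X] {m m₁ m₂ : Set X → ℝ≥0∞} {s : Set X} {b c r : ℝ≥0∞}

theorem exists_cover_of_mkMetric'_pre_lt (hm : m ∅ = 0)
    (h : OuterMeasure.mkMetric'.pre m r s < b) :
    ∃ t : ℕ → Set X, s ⊆ ⋃ i, t i ∧ (∀ i, ediam (t i) ≤ r) ∧ ∑' i, m (t i) < b := by
  simp only [OuterMeasure.mkMetric'.pre, OuterMeasure.boundedBy_apply, iInf_lt_iff] at h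
  obtain ⟨t, hst, hb⟩ := h
  have diam_le (i) : ediam (t i) ≤ r := by
    by_contra hi
    have hne : (t i).Nonempty := nonempty_iff_ne_empty.2 fun h0 => hi (by simp [h0])
    have htop := (ENNReal.le_tsum i).trans_lt hb
    simp [hne, hi, extend] at htop
  refine ⟨t, hst, diam_le, lt_of_le_of_lt (ENNReal.tsum_le_tsum fun i => ?_) hb⟩
  rcases (t i).eq_empty_or_nonempty with h0 | hne
  · simp [h0, hm]
  · simp [hne, extend]

theorem mkMetric'_le_const_mul (hc : c ≠ ∞) (h0 : c ≠ 0) (h : ∀ t, m₁ t ≤ c * m₂ t) :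
    OuterMeasure.mkMetric' m₁ s ≤ c * OuterMeasure.mkMetric' m₂ s := by
  refine le_of_tendsto_of_tendsto (OuterMeasure.mkMetric'.tendsto_pre m₁ s)
    (ENNReal.Tendsto.const_mul (OuterMeasure.mkMetric'.tendsto_pre m₂ s) (Or.inr hc))
    (Eventually.of_forall fun r => ?_)
  suffices OuterMeasure.mkMetric'.pre m₁ r ≤ c • OuterMeasure.mkMetric'.pre m₂ r from this s
  rw [OuterMeasure.mkMetric'.pre, OuterMeasure.mkMetric'.pre, OuterMeasure.smul_boundedBy hc,
    OuterMeasure.le_boundedBy]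
  intro t
  refine (OuterMeasure.boundedBy_le t).trans ?_
  by_cases ht : ediam t ≤ r <;> simp [extend, ht, h t, h0, ENNReal.mul_top]

end CaratheodoryConstruction

section FiberGauge

variable {X Y : Type*}

/-- The largest diameter of the intersection of `S` with a fiber of `f`. -/
noncomputable def fiberDiam [PseudoEMetricSpace X] (f : X → Y) (S : Set X) : ℝ≥0∞ :=
  ⨆ y, ediam (S ∩ f ⁻¹' {y})

/-- The `d`-th power of the largest fiber diameter of `S` times the measure of its image: a cheap
upper bound for the integral over `Y` of the `d`-dimensional size of the fibers of `f` in `S`. -/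
noncomputable def fiberGauge [PseudoEMetricSpace X] [MeasurableSpace Y] (f : X → Y)
    (ν : Measure Y) (d : ℝ) (S : Set X) : ℝ≥0∞ :=
  fiberDiam f S ^ d * ν (f '' S)

/-- Carathéodory's construction for the gauge `fiberGauge`, i.e. the outer measure obtained from
coverings by sets of diameter tending to zero. -/
noncomputable def fiberOuterMeasure [EMetricSpace X] [MeasurableSpace Y] (f : X → Y)
    (ν : Measure Y) (d : ℝ) : OuterMeasure X :=
  OuterMeasure.mkMetric' (fiberGauge f ν d)

theorem ediam_inter_preimage_le_fiberDiam [PseudoEMetricSpace X] (f : X → Y) (S : Set X) (y : Y) :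
    ediam (S ∩ f ⁻¹' {y}) ≤ fiberDiam f S :=
  le_iSup (fun y => ediam (S ∩ f ⁻¹' {y})) y

theorem fiberDiam_le_iff [PseudoEMetricSpace X] {f : X → Y} {S : Set X} {δ : ℝ≥0∞} :
    fiberDiam f S ≤ δ ↔ ∀ x ∈ S, ∀ y ∈ S, f x = f y → edist x y ≤ δ := by
  simp only [fiberDiam, iSup_le_iff, ediam_le_iff]
  constructor
  · intro h x hx y hy hxy
    exact h (f y) x ⟨hx, hxy⟩ y ⟨hy, rfl⟩
  · rintro h _ x ⟨hx, rfl⟩ y ⟨hy, hxy⟩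
    exact h x hx y hy hxy.symm

theorem fiberDiam_le_ediam [PseudoEMetricSpace X] (f : X → Y) (S : Set X) :
    fiberDiam f S ≤ ediam S :=
  iSup_le fun _ => ediam_mono inter_subset_left

theorem fiberGauge_empty [PseudoEMetricSpace X] [MeasurableSpace Y] (f : X → Y) (ν : Measure Y)
    (d : ℝ) : fiberGauge f ν d ∅ = 0 := by
  simp [fiberGauge]

theorem hausdorffMeasure_fiber_le_liminf [EMetricSpace X] [MeasurableSpace X] [BorelSpace X]
    (f : X → Y) {d : ℝ} (hd : 0 ≤ d) {A : Set X} {t : ℕ → ℕ → Set X} {G : ℕ → ℕ → Set Y}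
    (hA : ∀ k, A ⊆ ⋃ i, t k i) (ht : ∀ k i, ediam (t k i) ≤ (k : ℝ≥0∞)⁻¹)
    (hG : ∀ k i, f '' t k i ⊆ G k i) (y : Y) :
    μH[d] (A ∩ f ⁻¹' {y}) ≤
      liminf (fun k => ∑' i, (G k i).indicator (fun _ => fiberDiam f (t k i) ^ d) y) atTop := by
  let J : ℕ → Type := fun k => {i : ℕ // (t k i ∩ f ⁻¹' {y}).Nonempty}
  calc μH[d] (A ∩ f ⁻¹' {y})
      ≤ liminf (fun k => ∑' i : J k, ediam (t k i ∩ f ⁻¹' {y}) ^ d) atTop := by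
        refine Measure.hausdorffMeasure_le_liminf_tsum d _ _ ENNReal.tendsto_inv_nat_nhds_zero _
          (Eventually.of_forall fun k i => (ediam_mono inter_subset_left).trans (ht k i))
          (Eventually.of_forall fun k x hx => ?_)
        obtain ⟨i, hi⟩ := mem_iUnion.1 (hA k hx.1)
        exact mem_iUnion.2 ⟨⟨i, x, hi, hx.2⟩, hi, hx.2⟩
    _ ≤ _ := by
        refine liminf_le_liminf (Eventually.of_forall fun k => ?_)
        refine le_trans (ENNReal.tsum_le_tsum fun ⟨i, x, hx, hxy⟩ => ?_)
          (ENNReal.tsum_comp_le_tsum_of_injective Subtype.val_injective _)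
        rw [indicator_of_mem (hG k i ⟨x, hx, hxy⟩)]
        exact ENNReal.rpow_le_rpow (ediam_inter_preimage_le_fiberDiam f _ y) hd

theorem lintegral_hausdorffMeasure_fiber_le [EMetricSpace X] [MeasurableSpace X] [BorelSpace X]
    [MeasurableSpace Y] (f : X → Y) (ν : Measure Y) {d : ℝ} (hd : 0 ≤ d) (A : Set X) :
    ∫⁻ y, μH[d] (A ∩ f ⁻¹' {y}) ∂ν ≤ fiberOuterMeasure f ν d A := by
  rcases eq_top_or_lt_top (fiberOuterMeasure f ν d A) with htop | hfin
  · simp [htop]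
  have exists_cover (k : ℕ) : ∃ t : ℕ → Set X, A ⊆ ⋃ i, t i ∧ (∀ i, ediam (t i) ≤ (k : ℝ≥0∞)⁻¹) ∧
      ∑' i, fiberGauge f ν d (t i) < fiberOuterMeasure f ν d A + (k : ℝ≥0∞)⁻¹ := by
    refine exists_cover_of_mkMetric'_pre_lt (fiberGauge_empty f ν d) ?_
    refine lt_of_le_of_lt ?_ (ENNReal.lt_add_right hfin.ne (by simp : (k : ℝ≥0∞)⁻¹ ≠ 0))
    rw [fiberOuterMeasure, OuterMeasure.mkMetric'.eq_iSup_nat, OuterMeasure.iSup_apply]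
    exact le_iSup (fun k : ℕ => OuterMeasure.mkMetric'.pre (fiberGauge f ν d) (k : ℝ≥0∞)⁻¹ A) k
  choose t hA ht hsum using exists_cover
  let G (k i : ℕ) : Set Y := toMeasurable ν (f '' t k i)
  let g (k i : ℕ) : Y → ℝ≥0∞ := (G k i).indicator fun _ => fiberDiam f (t k i) ^ d
  have measurable_g (k i) : Measurable (g k i) :=
    measurable_const.indicator (measurableSet_toMeasurable ν _)
  have lintegral_g (k) :
      ∫⁻ y, ∑' i, g k i y ∂ν ≤ fiberOuterMeasure f ν d A + (k : ℝ≥0∞)⁻¹ := by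
    rw [lintegral_tsum fun i => (measurable_g k i).aemeasurable]
    refine le_trans (ENNReal.tsum_le_tsum fun i => ?_) (hsum k).le
    rw [lintegral_indicator_const (measurableSet_toMeasurable ν _), measure_toMeasurable,
      fiberGauge]
  calc ∫⁻ y, μH[d] (A ∩ f ⁻¹' {y}) ∂ν
      ≤ ∫⁻ y, liminf (fun k => ∑' i, g k i y) atTop ∂ν :=
        lintegral_mono fun y => hausdorffMeasure_fiber_le_liminf f hd hA ht
          (fun k i => subset_toMeasurable ν _) y
    _ ≤ liminf (fun k => ∫⁻ y, ∑' i, g k i y ∂ν) atTop :=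
        lintegral_liminf_le fun k => Measurable.tsum (measurable_g k)
    _ ≤ liminf (fun k : ℕ => fiberOuterMeasure f ν d A + (k : ℝ≥0∞)⁻¹) atTop :=
        liminf_le_liminf (Eventually.of_forall lintegral_g)
    _ = fiberOuterMeasure f ν d A := by
        simpa using (ENNReal.tendsto_inv_nat_nhds_zero.const_add _).liminf_eq

theorem lintegral_hausdorffMeasure_fiber_eq_zero [EMetricSpace X] [MeasurableSpace X]
    [BorelSpace X] [MeasurableSpace Y] {ν : Measure Y} [NullSingletonClass ν] {f : X → Y}
    (hf : (range f).Countable) (d : ℝ) (A : Set X) : ∫⁻ y, μH[d] (A ∩ f ⁻¹' {y}) ∂ν = 0 := by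
  refine lintegral_eq_zero_of_ae_eq_zero ?_
  filter_upwards [compl_mem_ae_iff.2 (hf.measure_zero ν)] with y hy
  simp [preimage_singleton_eq_empty.2 hy]

theorem fiberGauge_volume_le [PseudoEMetricSpace X] {f : X → ℝ} {K : ℝ≥0} (hf : LipschitzWith K f)
    {d : ℝ} (hd : 0 ≤ d) (S : Set X) : fiberGauge f volume d S ≤ K * ediam S ^ (d + 1) :=
  calc fiberGauge f volume d S ≤ ediam S ^ d * (K * ediam S) := by
        refine mul_le_mul' (ENNReal.rpow_le_rpow (fiberDiam_le_ediam f S) hd) ?_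
        exact (Real.volume_le_diam _).trans (hf.ediam_image_le S)
    _ = K * ediam S ^ (d + 1) := by
        rw [ENNReal.rpow_add_of_nonneg d 1 hd zero_le_one, ENNReal.rpow_one]
        ring

/-- **Eilenberg's inequality**. -/
theorem fiberOuterMeasure_volume_le_hausdorffMeasure [EMetricSpace X] [MeasurableSpace X]
    [BorelSpace X] {f : X → ℝ} {K : ℝ≥0} (hf : LipschitzWith K f) (hK : K ≠ 0) {d : ℝ}
    (hd : 0 ≤ d) (A : Set X) : fiberOuterMeasure f volume d A ≤ K * μH[d + 1] A := by
  rw [Measure.hausdorffMeasure, ← OuterMeasure.coe_mkMetric]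
  exact mkMetric'_le_const_mul ENNReal.coe_ne_top (by simpa using hK) (fiberGauge_volume_le hf hd)

end FiberGauge

section VitaliComparison

theorem mkMetric'_pre_le_of_ae_frequently_le {X : Type*} [MetricSpace X]
    [SecondCountableTopology X] [MeasurableSpace X] {μ : Measure X} (v : VitaliFamily μ)
    {m : Set X → ℝ≥0∞} (hm : ∀ N, μ N = 0 → OuterMeasure.mkMetric' m N = 0) (ν : Measure X)
    (h : ∀ᵐ x ∂μ, ∃ᶠ a in v.filterAt x, m a ≤ ν a) {U : Set X} (hU : IsOpen U) {δ : ℝ≥0∞}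
    (hδ : 0 < δ) : OuterMeasure.mkMetric'.pre m δ U ≤ ν U := by
  set ρ := OuterMeasure.mkMetric'.pre m δ
  let f : X → Set (Set X) := fun _ => {a | ρ a ≤ ν a ∧ a ⊆ U}
  let s : Set X := U ∩ {x | ∃ᶠ a in v.filterAt x, m a ≤ ν a}
  have fine : v.FineSubfamilyOn f s := by
    refine v.fineSubfamilyOn_of_frequently f s fun x hx => ?_
    refine (hx.2.and_eventually ((v.eventually_filterAt_subset_of_nhds
      (closedEBall_mem_nhds x (ENNReal.half_pos hδ.ne'))).and
      (v.eventually_filterAt_subset_of_nhds (hU.mem_nhds hx.1)))).mono ?_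
    rintro a ⟨ha, haδ, haU⟩
    have ediam_le : ediam a ≤ δ :=
      (ediam_mono haδ).trans (ediam_closedEBall_le.trans_eq (ENNReal.mul_div_cancel two_ne_zero
        ENNReal.ofNat_ne_top))
    exact ⟨(OuterMeasure.mkMetric'.pre_le ediam_le).trans ha, haU⟩
  have measure_diff : μ (U \ ⋃ p ∈ fine.index, fine.covering p) = 0 := by
    refine measure_mono_null (fun x hx => ?_)
      (measure_union_null (ae_iff.1 h) fine.measure_sdiff_biUnion)
    by_cases hxs : ∃ᶠ a in v.filterAt x, m a ≤ ν a
    · exact Or.inr ⟨⟨hx.1, hxs⟩, hx.2⟩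
    · exact Or.inl hxs
  have gauge_diff : ρ (U \ ⋃ p ∈ fine.index, fine.covering p) = 0 := by
    refine le_antisymm (le_trans ?_ (hm _ measure_diff).le) zero_le
    exact le_iSup₂ (f := fun r (_ : r > 0) => OuterMeasure.mkMetric'.pre m r) δ hδ _
  have : Countable fine.index := fine.index_countable
  calc ρ U ≤ ρ (U \ ⋃ p ∈ fine.index, fine.covering p) + ρ (⋃ p ∈ fine.index, fine.covering p) := by
        refine (measure_mono ?_).trans (measure_union_le _ _)
        rw [sdiff_union_self]
        exact subset_union_left
    _ ≤ ∑' p : fine.index, ρ (fine.covering p) := by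
        rw [gauge_diff, zero_add, biUnion_eq_iUnion]
        exact measure_iUnion_le _
    _ ≤ ∑' p : fine.index, ν (fine.covering p) :=
        ENNReal.tsum_le_tsum fun p => (fine.covering_mem p.2).1
    _ = ν (⋃ p : fine.index, fine.covering p) :=
        (measure_iUnion fine.covering_disjoint_subtype fun p => fine.measurableSet_u p.2).symm
    _ ≤ ν U := measure_mono (iUnion_subset fun p => (fine.covering_mem p.2).2)

theorem mkMetric'_le_of_ae_frequently_le {X : Type*} [MetricSpace X]
    [SecondCountableTopology X] [MeasurableSpace X] {μ : Measure X} (v : VitaliFamily μ)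
    {m : Set X → ℝ≥0∞} (hm : ∀ N, μ N = 0 → OuterMeasure.mkMetric' m N = 0) (ν : Measure X)
    [ν.OuterRegular] (h : ∀ᵐ x ∂μ, ∃ᶠ a in v.filterAt x, m a ≤ ν a)
    (A : Set X) : OuterMeasure.mkMetric' m A ≤ ν A := by
  rw [A.measure_eq_iInf_isOpen]
  simp only [OuterMeasure.mkMetric', OuterMeasure.iSup_apply, le_iInf_iff, iSup_le_iff]
  exact fun U hAU hU δ hδ => (measure_mono hAU).trans
    (mkMetric'_pre_le_of_ae_frequently_le v hm ν h hU hδ)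

end VitaliComparison

section Cylinder

variable {E : Type*} [NormedAddCommGroup E] [InnerProductSpace ℝ E]

/-- The product of the unit ball of `K` and the unit ball of its orthogonal complement. When `K` is
the line spanned by the gradient of a linear function, the sections by the fibers of that function
are balls of radius one, which makes the gauge `fiberGauge` optimal. -/
def orthogonalCylinder (K : Submodule ℝ E) [K.HasOrthogonalProjection] : Set E :=
  {y | ‖K.starProjection y‖ ≤ 1 ∧ ‖Kᗮ.starProjection y‖ ≤ 1}

section Submodule

variable (K : Submodule ℝ E) [K.HasOrthogonalProjection]

theorem isClosed_orthogonalCylinder : IsClosed (orthogonalCylinder K) :=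
  (isClosed_le K.starProjection.continuous.norm continuous_const).inter
    (isClosed_le Kᗮ.starProjection.continuous.norm continuous_const)

theorem closedBall_subset_orthogonalCylinder : closedBall 0 1 ⊆ orthogonalCylinder K := by
  intro y hy
  rw [mem_closedBall_zero_iff] at hy
  exact ⟨(K.norm_starProjection_apply_le y).trans hy, (Kᗮ.norm_starProjection_apply_le y).trans hy⟩

theorem norm_le_norm_starProjection_add (y : E) :
    ‖y‖ ≤ ‖K.starProjection y‖ + ‖Kᗮ.starProjection y‖ := by
  simpa using norm_add_le (K.starProjection y) (Kᗮ.starProjection y)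

theorem orthogonalCylinder_subset_closedBall : orthogonalCylinder K ⊆ closedBall 0 2 := by
  rintro y ⟨h₁, h₂⟩
  rw [mem_closedBall_zero_iff]
  linarith [norm_le_norm_starProjection_add K y]

theorem dist_le_of_mem_orthogonalCylinder {y z : E} (hy : y ∈ orthogonalCylinder K)
    (hz : z ∈ orthogonalCylinder K) : dist y z ≤ ‖K.starProjection (y - z)‖ + 2 := by
  have h : ‖Kᗮ.starProjection (y - z)‖ ≤ 2 := by
    rw [map_sub]
    linarith [norm_sub_le (Kᗮ.starProjection y) (Kᗮ.starProjection z), hy.2, hz.2]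
  rw [dist_eq_norm]
  linarith [norm_le_norm_starProjection_add K (y - z)]

theorem volume_orthogonalCylinder [FiniteDimensional ℝ E] [MeasurableSpace E] [BorelSpace E] :
    volume (orthogonalCylinder K) =
      volume (closedBall (0 : K) 1) * volume (closedBall (0 : Kᗮ) 1) := by
  have preserving : MeasurePreserving fun y : E =>
      (K.orthogonalProjectionOnto y, Kᗮ.orthogonalProjectionOnto y) := by
    simpa [Function.comp_def] using
      (WithLp.volume_preserving_ofLp K Kᗮ).comp K.orthogonalDecomposition.measurePreserving
  have preimage : orthogonalCylinder K = (fun y : E => (K.orthogonalProjectionOnto y,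
      Kᗮ.orthogonalProjectionOnto y)) ⁻¹' (closedBall 0 1 ×ˢ closedBall 0 1) := by
    ext y
    simp [orthogonalCylinder]
  rw [preimage, preserving.measure_preimage
    (measurableSet_closedBall.prod measurableSet_closedBall).nullMeasurableSet,
    Measure.volume_eq_prod, Measure.prod_prod]

end Submodule

theorem volume_closedBall_one_eq_euclideanSpace [FiniteDimensional ℝ E] [MeasurableSpace E]
    [BorelSpace E] {n : ℕ} (hn : finrank ℝ E = n) :
    volume (closedBall (0 : E) 1) = volume (closedBall (0 : EuclideanSpace ℝ (Fin n)) 1) := by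
  subst hn
  rw [← (stdOrthonormalBasis ℝ E).measurePreserving_repr.measure_preimage
    measurableSet_closedBall.nullMeasurableSet, LinearIsometryEquiv.preimage_closedBall, map_zero]

theorem volume_closedBall_span_singleton {e : E} (he : ‖e‖ = 1) [MeasurableSpace E] [BorelSpace E] :
    volume (closedBall (0 : ℝ ∙ e) 1) = 2 := by
  rw [← (LinearIsometryEquiv.toSpanUnitSingleton e he).measurePreserving.measure_preimage
    measurableSet_closedBall.nullMeasurableSet, LinearIsometryEquiv.preimage_closedBall, map_zero,
    Real.volume_closedBall]
  simp

/-- The factor `ω_k / 2 ^ k`, with `ω_k` the volume of the unit ball of `ℝᵏ`, which turns the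
Hausdorff measure `μH[k]`, normalized in Mathlib by `diam ^ k`, into the one agreeing with the
Lebesgue measure on `ℝᵏ`. -/
noncomputable def hausdorffNormalization (k : ℕ) : ℝ≥0∞ :=
  volume (closedBall (0 : EuclideanSpace ℝ (Fin k)) 1) / 2 ^ k

theorem hausdorffNormalization_ne_zero (k : ℕ) : hausdorffNormalization k ≠ 0 :=
  ENNReal.div_ne_zero.2 ⟨(measure_closedBall_pos _ _ one_pos).ne', by simp⟩

theorem hausdorffNormalization_ne_top (k : ℕ) : hausdorffNormalization k ≠ ∞ :=
  ENNReal.div_ne_top measure_closedBall_lt_top.ne (by simp)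

theorem volume_orthogonalCylinder_span_singleton [FiniteDimensional ℝ E] [MeasurableSpace E]
    [BorelSpace E] {e : E} (he : ‖e‖ = 1) {k : ℕ} (hk : finrank ℝ E = k + 1) :
    volume (orthogonalCylinder (ℝ ∙ e)) = 2 ^ (k + 1) * hausdorffNormalization k := by
  have hrank : finrank ℝ ↥(ℝ ∙ e)ᗮ = k := by
    have : Fact (finrank ℝ E = k + 1) := ⟨hk⟩
    exact Submodule.finrank_orthogonal_span_singleton (by rintro rfl; simp at he)
  rw [volume_orthogonalCylinder, volume_closedBall_span_singleton he,
    volume_closedBall_one_eq_euclideanSpace hrank, hausdorffNormalization, pow_succ', mul_assoc,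
    ENNReal.mul_div_cancel (by simp) (by simp)]

theorem norm_starProjection_span_singleton {e : E} (he : ‖e‖ = 1) (y : E) :
    ‖(ℝ ∙ e).starProjection y‖ = |⟪e, y⟫| := by
  rw [Submodule.starProjection_unit_singleton ℝ he, norm_smul, he, mul_one, Real.norm_eq_abs]

end Cylinder

section BlowUp

variable {E F : Type*} [NormedAddCommGroup E] [NormedSpace ℝ E] [NormedAddCommGroup F]
  [NormedSpace ℝ F]

/-- The rescaling of `f` at `x` to scale `r`, whose limit as `r` tends to zero is the derivative. -/
noncomputable def blowUp (f : E → F) (x : E) (r : ℝ) (y : E) : F :=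
  r⁻¹ • (f (x + r • y) - f x)

theorem tendstoUniformlyOn_blowUp {f : E → F} {f' : E →L[ℝ] F} {x : E} (hf : HasFDerivAt f f' x)
    {S : Set E} (hS : Bornology.IsBounded S) :
    TendstoUniformlyOn (blowUp f x) f' (𝓝[≠] 0) S := by
  rw [Metric.tendstoUniformlyOn_iff]
  intro ε hε
  obtain ⟨R, hR, hSR⟩ := hS.exists_pos_norm_le
  have remainder_le : {w | ‖f (x + w) - f x - f' w‖ ≤ ε / (2 * R) * ‖w‖} ∈ 𝓝 (0 : E) :=
    (hasFDerivAt_iff_isLittleO_nhds_zero.1 hf).def (by positivity)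
  filter_upwards [((NormedSpace.isVonNBounded_iff ℝ).2 hS remainder_le).eventually_nhdsNE_zero,
    self_mem_nhdsWithin] with r hmaps hr y hy
  have hr : r ≠ 0 := hr
  have blowUp_sub : blowUp f x r y - f' y = r⁻¹ • (f (x + r • y) - f x - f' (r • y)) := by
    rw [blowUp, map_smul, smul_sub r⁻¹ _ (r • f' y), inv_smul_smul₀ hr]
  rw [dist_comm, dist_eq_norm, blowUp_sub, norm_smul, norm_inv]
  calc ‖r‖⁻¹ * ‖f (x + r • y) - f x - f' (r • y)‖
      ≤ ‖r‖⁻¹ * (ε / (2 * R) * ‖r • y‖) := by gcongr; exact hmaps hy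
    _ = ε / (2 * R) * ‖y‖ := by rw [norm_smul]; field_simp
    _ ≤ ε / (2 * R) * R := by gcongr; exact hSR y hy
    _ = ε / 2 := by field_simp
    _ < ε := half_lt_self hε

theorem fiberDiam_vadd_smul_le (f : E → F) (x : E) {r : ℝ} (hr : 0 < r) (S : Set E) :
    fiberDiam f (x +ᵥ r • S) ≤ ENNReal.ofReal r * fiberDiam (blowUp f x r) S := by
  rw [fiberDiam_le_iff]
  rintro _ ⟨_, ⟨y, hy, rfl⟩, rfl⟩ _ ⟨_, ⟨z, hz, rfl⟩, rfl⟩ hyz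
  have hyz : blowUp f x r y = blowUp f x r z := by simp_all [blowUp]
  rw [edist_vadd_left, edist_smul₀, ENNReal.smul_def, smul_eq_mul, ← enorm_eq_nnnorm,
    Real.enorm_of_nonneg hr.le]
  gcongr
  exact fiberDiam_le_iff.1 le_rfl y hy z hz hyz

theorem volume_image_vadd_smul (f : E → ℝ) (x : E) {r : ℝ} (hr : 0 < r) (S : Set E) :
    volume (f '' (x +ᵥ r • S)) = ENNReal.ofReal r * volume (blowUp f x r '' S) := by
  have image_eq : f '' (x +ᵥ r • S) = f x +ᵥ r • (blowUp f x r '' S) := by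
    simp only [← image_vadd, ← image_smul, image_image]
    refine image_congr fun y _ => ?_
    simp [blowUp, hr.ne']
  rw [image_eq, measure_vadd, Measure.addHaar_smul_of_nonneg _ hr.le]
  simp

theorem fiberGauge_vadd_smul_le (f : E → ℝ) (x : E) {r : ℝ} (hr : 0 < r) {d : ℝ} (hd : 0 ≤ d)
    (S : Set E) : fiberGauge f volume d (x +ᵥ r • S) ≤
      ENNReal.ofReal r ^ (d + 1) * fiberGauge (blowUp f x r) volume d S :=
  calc fiberGauge f volume d (x +ᵥ r • S)
      ≤ (ENNReal.ofReal r * fiberDiam (blowUp f x r) S) ^ d *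
          (ENNReal.ofReal r * volume (blowUp f x r '' S)) := by
        rw [fiberGauge, volume_image_vadd_smul f x hr]
        gcongr
        exact fiberDiam_vadd_smul_le f x hr S
    _ = ENNReal.ofReal r ^ (d + 1) * fiberGauge (blowUp f x r) volume d S := by
        rw [fiberGauge, ENNReal.mul_rpow_of_nonneg _ _ hd,
          ENNReal.rpow_add_of_nonneg d 1 hd zero_le_one, ENNReal.rpow_one]
        ring

end BlowUp

section NearlyLinear

variable {E : Type*} [NormedAddCommGroup E] [InnerProductSpace ℝ E] {e : E} {a ε : ℝ} {g : E → ℝ}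

theorem exists_unit_apply_eq_norm_mul_inner [CompleteSpace E] [Nontrivial E] (φ : E →L[ℝ] ℝ) :
    ∃ e : E, ‖e‖ = 1 ∧ ∀ w, φ w = ‖φ‖ * ⟪e, w⟫ := by
  obtain ⟨v, rfl⟩ := (InnerProductSpace.toDual ℝ E).surjective φ
  rcases eq_or_ne v 0 with rfl | hv
  · obtain ⟨e, he⟩ := exists_norm_eq E zero_le_one
    exact ⟨e, he, by simp⟩
  · refine ⟨‖v‖⁻¹ • v, norm_smul_inv_norm hv, fun w => ?_⟩
    simp [real_inner_smul_left, hv]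

theorem volume_image_orthogonalCylinder_le (he : ‖e‖ = 1) (ha : 0 ≤ a)
    (hg : ∀ y ∈ orthogonalCylinder (ℝ ∙ e), |g y - a * ⟪e, y⟫| ≤ ε) :
    volume (g '' orthogonalCylinder (ℝ ∙ e)) ≤ ENNReal.ofReal (2 * (a + ε)) := by
  have subset_closedBall : g '' orthogonalCylinder (ℝ ∙ e) ⊆ closedBall 0 (a + ε) := by
    rintro _ ⟨y, hy, rfl⟩
    have inner_le : |⟪e, y⟫| ≤ 1 := norm_starProjection_span_singleton he y ▸ hy.1
    have mul_inner_le : |a * ⟪e, y⟫| ≤ a := by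
      rw [abs_mul, abs_of_nonneg ha]
      exact mul_le_of_le_one_right ha inner_le
    rw [mem_closedBall_zero_iff, Real.norm_eq_abs]
    linarith [abs_sub_abs_le_abs_sub (g y) (a * ⟪e, y⟫), hg y hy]
  exact (measure_mono subset_closedBall).trans_eq (Real.volume_closedBall _ _)

theorem fiberDiam_orthogonalCylinder_le (he : ‖e‖ = 1) (ha : 0 < a)
    (hg : ∀ y ∈ orthogonalCylinder (ℝ ∙ e), |g y - a * ⟪e, y⟫| ≤ ε) :
    fiberDiam g (orthogonalCylinder (ℝ ∙ e)) ≤ ENNReal.ofReal (2 * ε / a + 2) := by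
  refine fiberDiam_le_iff.2 fun y hy z hz hyz => ?_
  have mul_inner_le : a * |⟪e, y - z⟫| ≤ 2 * ε := by
    have := abs_sub (g z - a * ⟪e, z⟫) (g y - a * ⟪e, y⟫)
    rw [show g z - a * ⟪e, z⟫ - (g y - a * ⟪e, y⟫) = a * ⟪e, y - z⟫ by
      rw [hyz, inner_sub_right]; ring, abs_mul, abs_of_pos ha] at this
    linarith [hg y hy, hg z hz]
  rw [edist_dist]
  gcongr
  refine (dist_le_of_mem_orthogonalCylinder _ hy hz).trans ?_
  rw [norm_starProjection_span_singleton he]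
  gcongr
  rwa [le_div_iff₀' ha]

theorem exists_pos_fiberGauge_orthogonalCylinder_le (he : ‖e‖ = 1) (ha : 0 ≤ a) {d : ℝ}
    (hd : 0 ≤ d) {C : ℝ≥0∞} (hC : 2 ^ (d + 1) * ENNReal.ofReal a < C) :
    ∃ ε > 0, ∀ g : E → ℝ, (∀ y ∈ orthogonalCylinder (ℝ ∙ e), |g y - a * ⟪e, y⟫| ≤ ε) →
      fiberGauge g volume d (orthogonalCylinder (ℝ ∙ e)) ≤ C := by
  obtain ⟨D, hD, hD₀, fiberDiam_le⟩ : ∃ D : ℝ → ℝ, Continuous D ∧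
      ENNReal.ofReal (D 0) ^ d * ENNReal.ofReal (2 * (a + 0)) < C ∧
      ∀ ε g, (∀ y ∈ orthogonalCylinder (ℝ ∙ e), |g y - a * ⟪e, y⟫| ≤ ε) →
        fiberDiam g (orthogonalCylinder (ℝ ∙ e)) ≤ ENNReal.ofReal (D ε) := by
    rcases ha.eq_or_lt with rfl | ha
    · refine ⟨fun _ => 4, continuous_const, by simpa using hC, fun ε g _ => ?_⟩
      refine (fiberDiam_le_ediam g _).trans
        ((ediam_mono (orthogonalCylinder_subset_closedBall _)).trans ?_)
      rw [← closedEBall_ofReal zero_le_two]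
      exact ediam_closedEBall_le.trans_eq (by norm_num)
    · refine ⟨fun ε => 2 * ε / a + 2, by fun_prop, lt_of_eq_of_lt ?_ hC,
        fun ε g hg => fiberDiam_orthogonalCylinder_le he ha hg⟩
      rw [ENNReal.rpow_add_of_nonneg d 1 hd zero_le_one, add_zero, ENNReal.ofReal_mul zero_le_two]
      simp [mul_assoc]
  have gauge_tendsto : Tendsto
      (fun ε => ENNReal.ofReal (D ε) ^ d * ENNReal.ofReal (2 * (a + ε))) (𝓝[>] 0)
      (𝓝 (ENNReal.ofReal (D 0) ^ d * ENNReal.ofReal (2 * (a + 0)))) := by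
    refine Tendsto.mono_left ?_ nhdsWithin_le_nhds
    refine ENNReal.Tendsto.mul (Continuous.tendsto ?_ 0) (Or.inr ENNReal.ofReal_ne_top)
      (Continuous.tendsto ?_ 0) (Or.inr (ENNReal.rpow_ne_top_of_nonneg hd ENNReal.ofReal_ne_top))
    · exact ENNReal.continuous_rpow_const.comp (ENNReal.continuous_ofReal.comp hD)
    · exact ENNReal.continuous_ofReal.comp (by fun_prop)
  obtain ⟨ε, gauge_lt, hε⟩ :=
    ((gauge_tendsto.eventually_lt_const hD₀).and self_mem_nhdsWithin).exists
  refine ⟨ε, hε, fun g hg => le_trans ?_ gauge_lt.le⟩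
  exact mul_le_mul' (ENNReal.rpow_le_rpow (fiberDiam_le ε g hg) hd)
    (volume_image_orthogonalCylinder_le he ha hg)

end NearlyLinear

section LocalEstimate

theorem exists_vitaliFamily_closedBall_subset_subset {E : Type*} [NormedAddCommGroup E]
    [NormedSpace ℝ E] [FiniteDimensional ℝ E] [MeasurableSpace E] [BorelSpace E] (μ : Measure E)
    [μ.IsAddHaarMeasure] {L : ℝ} (hL : 1 ≤ L) :
    ∃ v : VitaliFamily μ, ∀ x r a, 0 < r → IsClosed a → closedBall x r ⊆ a →
      a ⊆ closedBall x (L * r) → a ∈ v.setsAt x := by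
  let C : ℝ≥0 := ((3 * L) ^ finrank ℝ E).toNNReal
  have doubling (x : E) {r : ℝ} (hr : 0 < r) :
      μ (closedBall x (3 * (L * r))) = C * μ (closedBall x r) := by
    rw [← mul_assoc, Measure.addHaar_closedBall_mul μ x (by linarith) hr.le,
      Measure.addHaar_closedBall_center μ x, ENNReal.ofReal]
  have tripling (x : E) : ∃ᶠ r in 𝓝[>] 0, μ (closedBall x (3 * r)) ≤ C * μ (closedBall x r) := by
    refine Eventually.frequently (eventually_mem_nhdsWithin.mono fun r hr => ?_)
    rw [← doubling x hr]
    exact measure_mono (closedBall_subset_closedBall (by nlinarith [mem_Ioi.1 hr]))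
  refine ⟨Vitali.vitaliFamily μ C tripling, fun x r a hr ha hra har => ⟨ha, ?_, L * r, har, ?_⟩⟩
  · exact ((nonempty_ball.2 hr).mono ball_subset_interior_closedBall).mono (interior_mono hra)
  · rw [doubling x hr]
    gcongr

variable {E : Type*} [NormedAddCommGroup E] [InnerProductSpace ℝ E] [FiniteDimensional ℝ E]
  [MeasurableSpace E] [BorelSpace E] {f : E → ℝ} {K : ℝ≥0} {k : ℕ}

theorem exists_eventually_fiberGauge_orthogonalCylinder_le (hf : LipschitzWith K f)
    (hk : finrank ℝ E = k + 1) {x : E} (hx : DifferentiableAt ℝ f x) {c : ℝ≥0∞}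
    (hc : K / hausdorffNormalization k < c) :
    ∃ e : E, ∀ᶠ r in 𝓝[>] (0 : ℝ),
      fiberGauge f volume k (x +ᵥ r • orthogonalCylinder (ℝ ∙ e)) ≤
        c * volume (x +ᵥ r • orthogonalCylinder (ℝ ∙ e)) := by
  have : Nontrivial E := nontrivial_of_finrank_pos (R := ℝ) (by omega)
  obtain ⟨e, he, apply_eq⟩ := exists_unit_apply_eq_norm_mul_inner (fderiv ℝ f x)
  set S := orthogonalCylinder (ℝ ∙ e)
  have slope_lt : (2 : ℝ≥0∞) ^ ((k : ℝ) + 1) * ENNReal.ofReal ‖fderiv ℝ f x‖ < c * volume S := by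
    rw [volume_orthogonalCylinder_span_singleton he hk, mul_left_comm]
    rw [ENNReal.div_lt_iff (Or.inl (hausdorffNormalization_ne_zero k))
      (Or.inl (hausdorffNormalization_ne_top k))] at hc
    have ofReal_norm_le : ENNReal.ofReal ‖fderiv ℝ f x‖ ≤ K := by
      simpa using ENNReal.ofReal_le_ofReal (norm_fderiv_le_of_lipschitz ℝ hf)
    exact_mod_cast ENNReal.mul_lt_mul_right (by simp) (by simp) (ofReal_norm_le.trans_lt hc)
  obtain ⟨ε, hε, gauge_le⟩ :=
    exists_pos_fiberGauge_orthogonalCylinder_le he (norm_nonneg _) k.cast_nonneg slope_lt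
  have blowUp_near : ∀ᶠ r in 𝓝[>] (0 : ℝ), ∀ y ∈ S, dist (fderiv ℝ f x y) (blowUp f x r y) < ε :=
    nhdsWithin_mono _ (fun r hr => ne_of_gt hr) (tendstoUniformlyOn_iff.1
      (tendstoUniformlyOn_blowUp hx.hasFDerivAt
        (isBounded_closedBall.subset (orthogonalCylinder_subset_closedBall _))) ε hε)
  refine ⟨e, ?_⟩
  filter_upwards [blowUp_near, self_mem_nhdsWithin] with r hnear hr
  have hr : 0 < r := hr
  calc fiberGauge f volume k (x +ᵥ r • S)
      ≤ ENNReal.ofReal r ^ ((k : ℝ) + 1) * fiberGauge (blowUp f x r) volume k S :=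
        fiberGauge_vadd_smul_le f x hr k.cast_nonneg S
    _ ≤ ENNReal.ofReal r ^ ((k : ℝ) + 1) * (c * volume S) := by
        gcongr
        refine gauge_le _ fun y hy => ?_
        rw [← apply_eq, ← Real.norm_eq_abs, ← dist_eq_norm, dist_comm]
        exact (hnear y hy).le
    _ = c * volume (x +ᵥ r • S) := by
        rw [measure_vadd, Measure.addHaar_smul_of_nonneg _ hr.le, hk, mul_left_comm,
          ENNReal.ofReal_pow hr.le]
        norm_cast

theorem frequently_filterAt_fiberGauge_le (hf : LipschitzWith K f)
    (hk : finrank ℝ E = k + 1) {v : VitaliFamily (volume : Measure E)}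
    (hv : ∀ x r a, 0 < r → IsClosed a → closedBall x r ⊆ a → a ⊆ closedBall x (2 * r) →
      a ∈ v.setsAt x)
    {x : E} (hx : DifferentiableAt ℝ f x) {c : ℝ≥0∞} (hc : K / hausdorffNormalization k < c) :
    ∃ᶠ a in v.filterAt x, fiberGauge f volume k a ≤ c * volume a := by
  obtain ⟨e, gauge_le⟩ := exists_eventually_fiberGauge_orthogonalCylinder_le hf hk hx hc
  have closedBall_eq {r s : ℝ} (hr : 0 < r) (hs : 0 ≤ s) :
      x +ᵥ r • closedBall (0 : E) s = closedBall x (s * r) := by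
    simp [smul_closedBall _ _ hs, abs_of_pos hr, mul_comm]
  have cylinder_tendsto :
      Tendsto (fun r : ℝ => x +ᵥ r • orthogonalCylinder (ℝ ∙ e)) (𝓝[>] 0) (v.filterAt x) := by
    refine v.tendsto_filterAt_iff.2 ⟨?_, fun ε hε => ?_⟩
    · filter_upwards [self_mem_nhdsWithin] with r hr
      have hr : 0 < r := hr
      refine hv x r _ hr (((isClosed_orthogonalCylinder _).smul_of_ne_zero hr.ne').vadd x) ?_ ?_
      · rw [← one_mul r, ← closedBall_eq hr zero_le_one, one_mul]
        exact vadd_set_mono (smul_set_mono (closedBall_subset_orthogonalCylinder _))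
      · rw [← closedBall_eq hr zero_le_two]
        exact vadd_set_mono (smul_set_mono (orthogonalCylinder_subset_closedBall _))
    · filter_upwards [Ioo_mem_nhdsGT (half_pos hε)] with r hr
      refine (vadd_set_mono (smul_set_mono (orthogonalCylinder_subset_closedBall _))).trans ?_
      rw [closedBall_eq hr.1 zero_le_two]
      exact closedBall_subset_closedBall (by linarith [hr.2])
  exact cylinder_tendsto.frequently gauge_le.frequently

theorem fiberOuterMeasure_eq_zero_of_volume_eq_zero (hf : LipschitzWith K f) (hK : K ≠ 0)
    (hk : finrank ℝ E = k + 1) {N : Set E} (hN : volume N = 0) :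
    fiberOuterMeasure f volume k N = 0 := by
  have hausdorff_null : μH[(k : ℝ) + 1] N = 0 := by
    have := Measure.absolutelyContinuous_isAddHaarMeasure (μH[finrank ℝ E] : Measure E) volume hN
    rwa [hk, Nat.cast_add_one] at this
  refine le_antisymm ?_ zero_le
  simpa [hausdorff_null] using
    fiberOuterMeasure_volume_le_hausdorffMeasure hf hK k.cast_nonneg N

theorem fiberOuterMeasure_volume_le (hf : LipschitzWith K f) (hK : K ≠ 0)
    (hk : finrank ℝ E = k + 1) (A : Set E) :
    fiberOuterMeasure f volume k A ≤ K / hausdorffNormalization k * volume A := by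
  obtain ⟨v, hv⟩ :=
    exists_vitaliFamily_closedBall_subset_subset (volume : Measure E) one_le_two
  have le_mul_volume (c : ℝ≥0∞) (hc : K / hausdorffNormalization k < c) (hc_top : c ≠ ∞) :
      fiberOuterMeasure f volume k A ≤ c * volume A := by
    have := Measure.OuterRegular.smul (volume : Measure E) hc_top
    refine mkMetric'_le_of_ae_frequently_le v
      (fun N hN => fiberOuterMeasure_eq_zero_of_volume_eq_zero hf hK hk hN) (c • volume) ?_ A
    filter_upwards [hf.ae_differentiableAt] with x hx
    exact frequently_filterAt_fiberGauge_le hf hk hv hx hc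
  have constant_lt_top : (K : ℝ≥0∞) / hausdorffNormalization k < ∞ :=
    ENNReal.div_lt_top ENNReal.coe_ne_top (hausdorffNormalization_ne_zero k)
  have constant_ne_zero : (K : ℝ≥0∞) / hausdorffNormalization k ≠ 0 :=
    ENNReal.div_ne_zero.2 ⟨by simpa using hK, hausdorffNormalization_ne_top k⟩
  have := nhdsGT_neBot_of_exists_gt ⟨∞, constant_lt_top⟩
  have mul_volume_tendsto : Tendsto (· * volume A) (𝓝[>] (K / hausdorffNormalization k))
      (𝓝 (K / hausdorffNormalization k * volume A)) :=
    (ENNReal.continuousAt_mul_const (Or.inr constant_ne_zero)).mono_left nhdsWithin_le_nhds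
  refine ge_of_tendsto mul_volume_tendsto ?_
  filter_upwards [Ioo_mem_nhdsGT constant_lt_top] with c hc
  exact le_mul_volume c hc.1 hc.2.ne

end LocalEstimate

theorem coarea_inequality_general {E : Type*} [NormedAddCommGroup E] [InnerProductSpace ℝ E]
    [FiniteDimensional ℝ E] [MeasurableSpace E] [BorelSpace E] {n : ℕ} (hn : finrank ℝ E = n)
    {K : ℝ≥0} {f : E → ℝ} (hf : LipschitzWith K f) (A : Set E) :
    ∫⁻ x : ℝ,
        (volume (closedBall (0 : EuclideanSpace ℝ (Fin (n - 1))) 1) / 2 ^ (n - 1))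
          * μH[(n : ℝ) - 1] (A ∩ f ⁻¹' {x})
      ≤ K * volume A := by
  change ∫⁻ x : ℝ, hausdorffNormalization (n - 1) * _ ≤ _
  rw [lintegral_const_mul' _ _ (hausdorffNormalization_ne_top _)]
  by_cases hdeg : (range f).Countable
  · simp [lintegral_hausdorffMeasure_fiber_eq_zero hdeg]
  have hK : K ≠ 0 := by
    rintro rfl
    have range_subsingleton : (range f).Subsingleton := by
      rintro _ ⟨x, rfl⟩ _ ⟨y, rfl⟩
      exact (LipschitzWith.zero_iff f).1 hf x y
    exact hdeg range_subsingleton.countable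
  obtain ⟨k, rfl⟩ : ∃ k, n = k + 1 := by
    refine Nat.exists_eq_add_one_of_ne_zero ?_
    rintro rfl
    have := finrank_zero_iff.1 hn
    exact hdeg (countable_range f)
  calc hausdorffNormalization k * ∫⁻ x, μH[((k + 1 : ℕ) : ℝ) - 1] (A ∩ f ⁻¹' {x})
      ≤ hausdorffNormalization k * fiberOuterMeasure f volume k A := by
        gcongr
        simpa using lintegral_hausdorffMeasure_fiber_le f volume k.cast_nonneg A
    _ ≤ hausdorffNormalization k * (K / hausdorffNormalization k * volume A) := by
        gcongr
        exact fiberOuterMeasure_volume_le hf hK hn A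
    _ = K * volume A := by
        rw [← mul_assoc, ENNReal.mul_div_cancel (hausdorffNormalization_ne_zero k)
          (hausdorffNormalization_ne_top k)]

/-- **Coarea inequality.** Let `f : ℝⁿ → ℝ` be a `1`-Lipschitz function and `A ⊆ ℝⁿ` a Borel
set. Then `vol_n A ≥ ∫_ℝ μ_{n-1} (A ∩ f⁻¹{x}) dx`, where
`μ_{n-1} = (ω_{n-1} / 2^{n-1}) · H^{n-1}` is the normalized `(n-1)`-dimensional Hausdorff
measure and `ω_{n-1}` is the volume of the unit ball in `ℝ^{n-1}`. -/
theorem coarea_inequality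
    (n : ℕ) (f : EuclideanSpace ℝ (Fin n) → ℝ) (hf : LipschitzWith 1 f)
    (A : Set (EuclideanSpace ℝ (Fin n))) (hA : MeasurableSet A) :
    ∫⁻ x : ℝ,
        (volume (Metric.closedBall (0 : EuclideanSpace ℝ (Fin (n - 1))) 1) / 2 ^ (n - 1))
          * μH[(n : ℝ) - 1] (A ∩ f ⁻¹' {x})
      ≤ volume A := by
  simpa using coarea_inequality_general finrank_euclideanSpace_fin hf A
end

section
/- Suppose X is a compact geodesic metric space such that every closed curve in X can be contracted within its R-neighborhood. Then the macroscopic dimension of X on scale 100·R is at most 1; that is, X admits a finite open cover of multiplicity at most 2 with every member of radius less than 100·R. -/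
/-!
Fix a point `p`. The preimages of the intervals `((i - 1) R, (i + 1) R)`, `i : ℤ`, under
`dist p ·` cover every point at most twice, and so do their path components. It remains to see
that a path component has radius at most `10 R`. Suppose `x` and `y` are joined by a path in a
slab and are at distance at least `10 R`. Concatenate a geodesic from `p` to `x`, the path from
`x` to `y` and a geodesic from `y` back to `p`. On the `R`-neighborhood of this loop the map
`z ↦ (dist p z - l) + (dist z x - dist z y) i`, with `l` slightly below the slab, does not vanish,
and it winds once around `0` along the loop: near the geodesic to `x` it avoids the closed first
quadrant, near the path in the slab it stays in the right half-plane, and near the geodesic from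
`y` it avoids the closed fourth quadrant. Hence the loop is not contractible within its
`R`-neighborhood.
-/

open Metric unitInterval

/-- A metric space is geodesic if any two points are joined by a path realizing the
distance. -/
def IsGeodesicSpace (X : Type*) [MetricSpace X] : Prop :=
  ∀ x y : X, ∃ f : ℝ → X, f 0 = x ∧ f (dist x y) = y ∧
    ∀ s ∈ Set.Icc (0:ℝ) (dist x y), ∀ t ∈ Set.Icc (0:ℝ) (dist x y),
      dist (f s) (f t) = |s - t|

/-- `ContractsWithin R γ` says that the closed curve `γ` is freely null-homotopic through closed
curves in the open `R`-neighborhood of its image. The first coordinate of the homotopy parametrizes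
the curves, the second one is the time. -/
def ContractsWithin {X : Type*} [PseudoMetricSpace X] (R : ℝ) (γ : C(I, X)) : Prop :=
  ∃ (H : C(I × I, X)) (x₀ : X), (∀ s, H (s, 0) = γ s) ∧ (∀ t, H (0, t) = H (1, t)) ∧
    (∀ s, H (s, 1) = x₀) ∧ ∀ z, ∃ t, dist (H z) (γ t) < R

/-- `MacroscopicDimLE X S n` says that the macroscopic dimension of `X` on scale `S` is at most
`n`. The cover is not required to be finite, so that the notion makes sense for noncompact spaces;
for compact ones see `MacroscopicDimLE.exists_finite_cover`. -/
def MacroscopicDimLE (X : Type*) [PseudoMetricSpace X] (S : ℝ) (n : ℕ) : Prop :=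
  ∃ 𝒰 : Set (Set X), (∀ V ∈ 𝒰, IsOpen V) ∧ ⋃₀ 𝒰 = Set.univ ∧
    (∀ x, {V ∈ 𝒰 | x ∈ V}.encard ≤ n + 1) ∧ ∀ V ∈ 𝒰, ∃ (c : X) (r : ℝ), r < S ∧ V ⊆ ball c r

/-! ### Covers -/

theorem MacroscopicDimLE.exists_finite_cover {X : Type*} [PseudoMetricSpace X] [CompactSpace X]
    {S : ℝ} {n : ℕ} (h : MacroscopicDimLE X S n) :
    ∃ (k : ℕ) (V : Fin k → Set X), (∀ i, IsOpen (V i)) ∧ ⋃ i, V i = Set.univ ∧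
      (∀ x, Nat.card {i // x ∈ V i} ≤ n + 1) ∧ ∀ i, ∃ (c : X) (r : ℝ), r < S ∧ V i ⊆ ball c r := by
  obtain ⟨𝒰, hopen, hcover, hmult, hradius⟩ := h
  obtain ⟨𝒱, h𝒱𝒰, h𝒱, hsub⟩ := isCompact_univ.elim_finite_subcover_image hopen
    (by rw [← Set.sUnion_eq_biUnion, hcover])
  obtain ⟨k, V, hinj, rfl⟩ := h𝒱.fin_param
  have hV (i : Fin k) : V i ∈ 𝒰 := h𝒱𝒰 ⟨i, rfl⟩
  refine ⟨k, V, fun i ↦ hopen _ (hV i), ?_, fun x ↦ ?_, fun i ↦ hradius _ (hV i)⟩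
  · simpa [Set.univ_subset_iff] using hsub
  · have hx : V '' {i | x ∈ V i} ⊆ {W ∈ 𝒰 | x ∈ W} := by
      rintro _ ⟨i, hi, rfl⟩
      exact ⟨hV i, hi⟩
    have hcard : {i | x ∈ V i}.encard ≤ n + 1 :=
      (hinj.encard_image _).symm.trans_le ((Set.encard_le_encard hx).trans (hmult x))
    rw [← (Set.toFinite _).cast_ncard_eq] at hcard
    exact_mod_cast hcard

theorem MacroscopicDimLE.of_pathComponentIn {X : Type*} [PseudoMetricSpace X]
    [LocallyPathConnectedSpace X] {ι : Type*} {U : ι → Set X} {S : ℝ} {n : ℕ}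
    (hopen : ∀ i, IsOpen (U i)) (hcover : ∀ x, ∃ i, x ∈ U i)
    (hmult : ∀ x, {i | x ∈ U i}.encard ≤ n + 1)
    (hradius : ∀ i, ∀ x ∈ U i, ∃ (c : X) (r : ℝ), r < S ∧ pathComponentIn (U i) x ⊆ ball c r) :
    MacroscopicDimLE X S n := by
  refine ⟨{V | ∃ i, ∃ x ∈ U i, pathComponentIn (U i) x = V}, ?_, ?_, fun x ↦ ?_, ?_⟩
  · rintro _ ⟨i, x, -, rfl⟩
    exact (hopen i).pathComponentIn x
  · refine Set.eq_univ_of_forall fun x ↦ ?_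
    obtain ⟨i, hi⟩ := hcover x
    exact ⟨_, ⟨i, x, hi, rfl⟩, mem_pathComponentIn_self hi⟩
  · refine le_trans (Set.encard_le_encard ?_)
      ((Set.encard_image_le (fun i ↦ pathComponentIn (U i) x) _).trans (hmult x))
    rintro _ ⟨⟨i, y, -, rfl⟩, hx⟩
    have hxi : x ∈ U i := pathComponentIn_subset hx
    exact ⟨i, hxi, pathComponentIn_congr hx⟩
  · rintro _ ⟨i, x, hx, rfl⟩
    exact hradius i x hx

section Floor

variable {K : Type*} [Field K] [LinearOrder K] [IsStrictOrderedRing K] [FloorRing K] {R : K}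

theorem abs_sub_floor_div_mul_lt (hR : 0 < R) (t : K) : |t - ⌊t / R⌋ * R| < R := by
  rw [abs_of_nonneg (Int.sub_floor_div_mul_nonneg t hR)]
  exact Int.sub_floor_div_mul_lt t hR

theorem encard_setOf_abs_sub_intCast_mul_lt_le_two (hR : 0 < R) (t : K) :
    {i : ℤ | |t - i * R| < R}.encard ≤ 2 := by
  suffices h : {i : ℤ | |t - i * R| < R} ⊆ {⌊t / R⌋, ⌈t / R⌉} from
    (Set.encard_le_encard h).trans ((Set.encard_insert_le _ _).trans_eq
      (by rw [Set.encard_singleton, one_add_one_eq_two]))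
  intro i hi
  have hlo : (i : K) - 1 < t / R := by
    rw [lt_div_iff₀ hR]
    linarith [(abs_lt.mp hi).1]
  have hhi : t / R < i + 1 := by
    rw [div_lt_iff₀ hR]
    linarith [(abs_lt.mp hi).2]
  rcases le_total (i : K) (t / R) with h | h
  · exact .inl (Int.floor_eq_iff.mpr ⟨h, hhi⟩).symm
  · exact .inr (Int.ceil_eq_iff.mpr ⟨hlo, h⟩).symm

end Floor

/-! ### Winding around the origin -/

theorem exists_continuousMap_exp_eq {A : Type*} [TopologicalSpace A] [SimplyConnectedSpace A]
    [LocallyPathConnectedSpace A] (f : C(A, ℂ)) (hf : ∀ a, f a ≠ 0) :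
    ∃ g : C(A, ℂ), ∀ a, Complex.exp (g a) = f a := by
  obtain ⟨a₀⟩ : Nonempty A := inferInstance
  obtain ⟨g, ⟨-, hg⟩, -⟩ := Complex.isCoveringMapOn_exp.existsUnique_continuousMap_lifts f
    (Complex.exp_log (hf a₀)) hf
  exact ⟨g, congrFun hg⟩

theorem eq_of_forall_exp_eq {A : Type*} [TopologicalSpace A] [PreconnectedSpace A] {g : A → ℂ}
    (hg : Continuous g) {c : ℂ} (hc : ∀ a, Complex.exp (g a) = c) (a b : A) : g a = g b :=
  Complex.isCoveringMap_exp.const_of_comp hg (by simp [hc]) a b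

theorem exists_exp_eq_of_nullHomotopy (K : C(I × I, ℂ)) (hK : ∀ z, K z ≠ 0)
    (hloop : ∀ t, K (0, t) = K (1, t)) {c : ℂ} (hconst : ∀ s, K (s, 1) = c) :
    ∃ g : C(I, ℂ), g 0 = g 1 ∧ ∀ s, Complex.exp (g s) = K (s, 0) := by
  have : ContractibleSpace I := (convex_Icc 0 1).contractibleSpace ⟨0, by simp⟩
  have : LocallyPathConnectedSpace I := (convex_Icc (0 : ℝ) 1).locallyPathConnectedSpace
  obtain ⟨G, hG⟩ := exists_continuousMap_exp_eq K hK
  refine ⟨⟨fun s ↦ G (s, 0), by fun_prop⟩, ?_, fun s ↦ hG (s, 0)⟩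
  have hend : G (0, 1) = G (1, 1) :=
    eq_of_forall_exp_eq (g := fun s ↦ G (s, 1)) (by fun_prop) (fun s ↦ (hG _).trans (hconst s)) 0 1
  have hdiff : G (0, 0) - G (1, 0) = G (0, 1) - G (1, 1) :=
    eq_of_forall_exp_eq (g := fun t ↦ G (0, t) - G (1, t)) (c := 1) (by fun_prop)
      (fun t ↦ by rw [Complex.exp_sub, hG, hG, hloop, div_self (hK _)]) 0 1
  rwa [hend, sub_self, sub_eq_zero] at hdiff

theorem mem_Ioo_of_isPreconnected {α : Type*} [TopologicalSpace α] {s : Set α}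
    (hs : IsPreconnected s) {f : α → ℝ} (hf : ContinuousOn f s) {c d : ℝ} (hc : ∀ z ∈ s, f z ≠ c)
    (hd : ∀ z ∈ s, f z ≠ d) {a b : α} (ha : a ∈ s) (hb : b ∈ s) (hfa : f a ∈ Set.Ioo c d) :
    f b ∈ Set.Ioo c d := by
  have hord := (hs.image f hf).ordConnected
  have hfas := Set.mem_image_of_mem f ha
  have hfbs := Set.mem_image_of_mem f hb
  constructor
  · by_contra! hbc
    obtain ⟨z, hz, hzc⟩ := hord.out hfbs hfas ⟨hbc, hfa.1.le⟩
    exact hc z hz hzc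
  · by_contra! hbd
    obtain ⟨z, hz, hzd⟩ := hord.out hfas hfbs ⟨hfa.2.le, hbd⟩
    exact hd z hz hzd

section Winding

open scoped Real

theorem exists_sub_int_mul_two_pi_mem_Ioo {θ : ℝ} (h : Real.cos θ < 0) :
    ∃ k : ℤ, θ - k * (2 * π) ∈ Set.Ioo (π / 2) (3 * π / 2) := by
  obtain ⟨k, hk, -⟩ := existsUnique_sub_zsmul_mem_Ico Real.two_pi_pos θ (-(π / 2))
  rw [zsmul_eq_mul] at hk
  refine ⟨k, ?_, by linarith [hk.2]⟩
  by_contra! hle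
  rw [← Real.cos_sub_int_mul_two_pi θ k] at h
  exact h.not_ge (Real.cos_nonneg_of_mem_Icc ⟨hk.1, hle⟩)

variable {α : Type*} [TopologicalSpace α] {θ : α → ℝ} {A B C : Set α} {x a b y : α}

theorem two_pi_lt_angle_of_winds (hθ : Continuous θ) (hA : IsPreconnected A) (hB : IsPreconnected B)
    (hC : IsPreconnected C) (hx : x ∈ A) (ha : a ∈ A ∩ B) (hb : b ∈ B ∩ C) (hy : y ∈ C)
    (hθx : θ x ∈ Set.Ioo (π / 2) (3 * π / 2))
    (hθA : ∀ s ∈ A, Real.cos (θ s) < 0 ∨ Real.sin (θ s) < 0)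
    (hθB : ∀ s ∈ B, 0 < Real.cos (θ s))
    (hθC : ∀ s ∈ C, Real.cos (θ s) < 0 ∨ 0 < Real.sin (θ s)) : 2 * π < θ y := by
  have hpi := Real.pi_pos
  have cos_three : Real.cos (3 * π / 2) = 0 := Real.cos_eq_zero_iff.mpr ⟨1, by push_cast; ring⟩
  have cos_five : Real.cos (5 * π / 2) = 0 := Real.cos_eq_zero_iff.mpr ⟨2, by push_cast; ring⟩
  have cos_seven : Real.cos (7 * π / 2) = 0 := Real.cos_eq_zero_iff.mpr ⟨3, by push_cast; ring⟩
  have sin_seven : Real.sin (7 * π / 2) = -1 := Real.sin_eq_neg_one_iff.mpr ⟨2, by push_cast; ring⟩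
  have hθa : θ a ∈ Set.Ioo (π / 2) (2 * π) :=
    mem_Ioo_of_isPreconnected hA hθ.continuousOn
      (fun s hs h ↦ by have := hθA s hs; norm_num [h] at this)
      (fun s hs h ↦ by have := hθA s hs; norm_num [h] at this) hx ha.1
      ⟨hθx.1, by linarith [hθx.2]⟩
  have hθa' : 3 * π / 2 < θ a := by
    by_contra! h
    exact (hθB a ha.2).not_ge
      (Real.cos_nonpos_of_pi_div_two_le_of_le hθa.1.le (by linarith))
  have hθb : θ b ∈ Set.Ioo (3 * π / 2) (5 * π / 2) :=
    mem_Ioo_of_isPreconnected hB hθ.continuousOn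
      (fun s hs h ↦ (hθB s hs).ne' (h ▸ cos_three))
      (fun s hs h ↦ (hθB s hs).ne' (h ▸ cos_five)) ha.2 hb.1
      ⟨hθa', by linarith [hθa.2]⟩
  have hθb' : 2 * π < θ b := by
    by_contra! h
    have hsin : 0 < Real.sin (θ b) := (hθC b hb.2).resolve_left (hθB b hb.1).not_gt
    rw [← Real.sin_sub_two_pi] at hsin
    exact hsin.not_ge
      (Real.sin_nonpos_of_nonpos_of_neg_pi_le (by linarith) (by linarith [hθb.1]))
  have hθy : θ y ∈ Set.Ioo (2 * π) (7 * π / 2) :=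
    mem_Ioo_of_isPreconnected hC hθ.continuousOn
      (fun s hs h ↦ by have := hθC s hs; norm_num [h] at this)
      (fun s hs h ↦ by have := hθC s hs; norm_num [h, cos_seven, sin_seven] at this) hb.2 hy
      ⟨hθb', by linarith [hθb.2]⟩
  exact hθy.1

theorem angle_lt_of_winds (hθ : Continuous θ) (hA : IsPreconnected A) (hB : IsPreconnected B)
    (hC : IsPreconnected C) (hx : x ∈ A) (ha : a ∈ A ∩ B) (hb : b ∈ B ∩ C) (hy : y ∈ C)
    (hθx : Real.cos (θ x) < 0)
    (hθA : ∀ s ∈ A, Real.cos (θ s) < 0 ∨ Real.sin (θ s) < 0)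
    (hθB : ∀ s ∈ B, 0 < Real.cos (θ s))
    (hθC : ∀ s ∈ C, Real.cos (θ s) < 0 ∨ 0 < Real.sin (θ s)) : θ x < θ y := by
  obtain ⟨k, hk⟩ := exists_sub_int_mul_two_pi_mem_Ioo hθx
  have hlt := two_pi_lt_angle_of_winds (θ := fun s ↦ θ s - k * (2 * π)) (by fun_prop) hA hB hC
    hx ha hb hy hk (by simpa using hθA) (by simpa using hθB) (by simpa using hθC)
  linarith [hk.2, Real.pi_pos]

end Winding

theorem exists_eq_zero_of_nullHomotopy_of_winds (K : C(I × I, ℂ))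
    (hloop : ∀ t, K (0, t) = K (1, t)) {c : ℂ} (hconst : ∀ s, K (s, 1) = c) {a b : I} (hab : a ≤ b)
    (hA : ∀ s ≤ a, (K (s, 0)).re < 0 ∨ (K (s, 0)).im < 0)
    (hB : ∀ s ∈ Set.Icc a b, 0 < (K (s, 0)).re)
    (hC : ∀ s ≥ b, (K (s, 0)).re < 0 ∨ 0 < (K (s, 0)).im) : ∃ z, K z = 0 := by
  by_contra! hK
  obtain ⟨g, hg01, hg⟩ := exists_exp_eq_of_nullHomotopy K hK hloop hconst
  have h0 : (K (0, 0)).re < 0 := by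
    have h1 := hC 1 unitInterval.le_one'
    rw [← hloop] at h1
    rcases hA 0 unitInterval.nonneg', h1 with ⟨h | h, h' | h'⟩ <;> linarith
  simp only [← hg, Complex.exp_re, Complex.exp_im, ← smul_eq_mul,
    smul_pos_iff_of_pos_left (Real.exp_pos _), smul_neg_iff_of_pos_left (Real.exp_pos _)]
    at hA hB hC h0
  have hlt : (g 0).im < (g 1).im :=
    angle_lt_of_winds (θ := fun s ↦ (g s).im)
      (A := Set.Icc 0 a) (B := Set.Icc a b) (C := Set.Icc b 1)
      (by fun_prop) isPreconnected_Icc isPreconnected_Icc isPreconnected_Icc (by simp)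
      (a := a) ⟨⟨a.2.1, le_rfl⟩, le_rfl, hab⟩ (b := b) ⟨⟨hab, le_rfl⟩, le_rfl, b.2.2⟩
      ⟨b.2.2, le_rfl⟩
      h0 (fun s hs ↦ hA s hs.2) hB (fun s hs ↦ hC s hs.1)
  exact hlt.ne (congrArg Complex.im hg01)

/-! ### Loops that are not contractible within their neighborhood -/

section ContractsWithin

variable {X : Type*} [PseudoMetricSpace X] {R : ℝ} {γ : C(I, X)}

theorem ContractsWithin.pos (h : ContractsWithin R γ) : 0 < R := by
  obtain ⟨H, -, -, -, -, hnear⟩ := h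
  obtain ⟨t, ht⟩ := hnear 0
  exact dist_nonneg.trans_lt ht

theorem not_contractsWithin_of_winds (F : C(X, ℂ)) {a b : I} (hab : a ≤ b)
    (hA : ∀ s ≤ a, ∀ z ∈ ball (γ s) R, (F z).re < 0 ∨ (F z).im < 0)
    (hB : ∀ s ∈ Set.Icc a b, ∀ z ∈ ball (γ s) R, 0 < (F z).re)
    (hC : ∀ s ≥ b, ∀ z ∈ ball (γ s) R, (F z).re < 0 ∨ 0 < (F z).im) :
    ¬ ContractsWithin R γ := by
  intro h
  have hmem (s : I) : γ s ∈ ball (γ s) R := mem_ball_self h.pos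
  obtain ⟨H, x₀, hstart, hloop, hend, hnear⟩ := h
  obtain ⟨w, hw⟩ : ∃ w, F.comp H w = 0 :=
    exists_eq_zero_of_nullHomotopy_of_winds (F.comp H) (fun t ↦ congrArg F (hloop t))
      (fun s ↦ congrArg F (hend s)) hab
      (fun s hs ↦ by simpa [hstart] using hA s hs _ (hmem s))
      (fun s hs ↦ by simpa [hstart] using hB s hs _ (hmem s))
      (fun s hs ↦ by simpa [hstart] using hC s hs _ (hmem s))
  replace hw : F (H w) = 0 := hw
  obtain ⟨s, hs⟩ := hnear w
  rcases le_total s a with hsa | has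
  · simpa [hw] using hA s hsa _ hs
  rcases le_total s b with hsb | hbs
  · simpa [hw] using hB s ⟨has, hsb⟩ _ hs
  · simpa [hw] using hC s hbs _ hs

end ContractsWithin

section Concatenation

variable {X : Type*} [TopologicalSpace X] {x y z w : X} {s : I}

theorem path_trans_apply_mem_range_left (γ : Path x y) (γ' : Path y z) (hs : (s : ℝ) ≤ 1 / 2) :
    γ.trans γ' s ∈ Set.range γ := by
  rw [Path.trans_apply, dif_pos hs]
  exact Set.mem_range_self _

theorem exists_path_trans_apply_eq_right (γ : Path x y) (γ' : Path y z) (hs : 1 / 2 ≤ (s : ℝ)) :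
    ∃ t : I, (t : ℝ) = 2 * s - 1 ∧ γ.trans γ' s = γ' t := by
  have ht : 2 * (s : ℝ) - 1 ∈ I := unitInterval.two_mul_sub_one_mem_iff.mpr ⟨hs, s.2.2⟩
  refine ⟨⟨_, ht⟩, rfl, ?_⟩
  rw [← Path.extend_apply γ' ht, ← Path.extend_trans_of_half_le γ γ' hs, Path.extend_apply _ s.2]

theorem path_trans_trans_apply_mem_range_middle (α : Path x y) (β : Path y z) (γ : Path z w)
    (hs : (s : ℝ) ∈ Set.Icc (1 / 2) (3 / 4)) : α.trans (β.trans γ) s ∈ Set.range β := by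
  obtain ⟨t, ht, hst⟩ := exists_path_trans_apply_eq_right α (β.trans γ) hs.1
  rw [hst]
  exact path_trans_apply_mem_range_left β γ (by linarith [hs.2])

theorem path_trans_trans_apply_mem_range_right (α : Path x y) (β : Path y z) (γ : Path z w)
    (hs : 3 / 4 ≤ (s : ℝ)) : α.trans (β.trans γ) s ∈ Set.range γ := by
  obtain ⟨t, ht, hst⟩ := exists_path_trans_apply_eq_right α (β.trans γ) (s := s) (by linarith)
  obtain ⟨t', -, htt'⟩ := exists_path_trans_apply_eq_right β γ (s := t) (by linarith)
  rw [hst, htt']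
  exact Set.mem_range_self _

end Concatenation

/-! ### Geodesic spaces -/

section Geodesic

variable {X : Type*} [MetricSpace X]

theorem IsGeodesicSpace.exists_path (hgeo : IsGeodesicSpace X) (x y : X) :
    ∃ q : Path x y, ∀ t, dist x (q t) + dist (q t) y = dist x y := by
  obtain ⟨f, hf0, hf1, hf⟩ := hgeo x y
  have hd : 0 ≤ dist x y := dist_nonneg
  have hmem (t : I) : (t : ℝ) * dist x y ∈ Set.Icc 0 (dist x y) :=
    ⟨mul_nonneg t.2.1 hd, mul_le_of_le_one_left hd t.2.2⟩
  have hfc : ContinuousOn f (Set.Icc 0 (dist x y)) :=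
    LipschitzOnWith.continuousOn (K := 1) <| .of_dist_le_mul fun s hs t ht ↦ by
      simp [hf s hs t ht, Real.dist_eq]
  refine ⟨⟨⟨fun t ↦ f (t * dist x y), hfc.comp_continuous (by fun_prop) hmem⟩,
    by simp [hf0], by simp [hf1]⟩, fun t ↦ ?_⟩
  have hx : dist x (f (t * dist x y)) = t * dist x y := by
    have := hf 0 ⟨le_rfl, hd⟩ _ (hmem t)
    rwa [hf0, zero_sub, abs_neg, abs_of_nonneg (hmem t).1] at this
  have hy : dist (f (t * dist x y)) y = dist x y - t * dist x y := by
    rw [← abs_of_nonneg (sub_nonneg.mpr (hmem t).2), abs_sub_comm,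
      ← hf _ (hmem t) _ ⟨hd, le_rfl⟩, hf1]
  change dist x (f (t * dist x y)) + dist (f (t * dist x y)) y = dist x y
  rw [hx, hy, add_sub_cancel]

theorem IsGeodesicSpace.locallyPathConnectedSpace (hgeo : IsGeodesicSpace X) :
    LocallyPathConnectedSpace X := by
  refine .of_bases (fun x ↦ nhds_basis_ball) fun x r hr ↦ ⟨x, mem_ball_self hr, fun {y} hy ↦ ?_⟩
  obtain ⟨q, hq⟩ := hgeo.exists_path x y
  refine ⟨q, fun t ↦ ?_⟩
  rw [mem_ball'] at hy ⊢
  linarith [hq t, dist_nonneg (x := q t) (y := y)]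

end Geodesic

theorem dist_lt_or_dist_lt_of_near_geodesic {X : Type*} [PseudoMetricSpace X] {p q x y z : X}
    {l δ R : ℝ} (hq : dist p q + dist q x = dist p x) (hx : dist p x < l + δ)
    (hxy : 2 * δ + 4 * R ≤ dist x y) (hz : dist z q < R) :
    dist p z < l ∨ dist z x < dist z y := by
  by_contra! h
  have hqx : dist q x < δ + R := by
    linarith [dist_triangle p q z, dist_comm q z, h.1]
  have hzx : dist z x < δ + 2 * R := by linarith [dist_triangle z q x]
  linarith [dist_triangle_left x y z, h.2]

/-- The plane coordinates `(dist p z - l, dist z x - dist z y)` of a point `z`, used to detect that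
a loop from `p` through `x` and `y` is not contractible near its image. -/
noncomputable def distCoordinates {X : Type*} [PseudoMetricSpace X] (p x y : X) (l : ℝ) :
    C(X, ℂ) where
  toFun z := Complex.equivRealProdCLM.symm (dist p z - l, dist z x - dist z y)

theorem dist_lt_of_joinedIn_annulus {X : Type*} [MetricSpace X] (hgeo : IsGeodesicSpace X)
    {p x y : X} {R c r : ℝ} (hp : ∀ γ : Path p p, ContractsWithin R (γ : C(I, X)))
    (hxy : JoinedIn {z | |dist p z - c| < r} x y) : dist x y < 6 * R + 4 * r := by
  by_contra! hfar
  obtain ⟨α, hα⟩ := hxy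
  replace hα : ∀ t, |dist p (α t) - c| < r := hα
  obtain ⟨u, hu⟩ := hgeo.exists_path p x
  obtain ⟨v, hv⟩ := hgeo.exists_path p y
  have hpx : dist p x < (c - r - R) + (2 * r + R) := by
    have := (abs_lt.mp (hα 0)).2
    rw [α.source] at this
    linarith
  have hpy : dist p y < (c - r - R) + (2 * r + R) := by
    have := (abs_lt.mp (hα 1)).2
    rw [α.target] at this
    linarith
  refine not_contractsWithin_of_winds (distCoordinates p x y (c - r - R))
    (a := ⟨1 / 2, by norm_num, by norm_num⟩) (b := ⟨3 / 4, by norm_num, by norm_num⟩)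
    (Subtype.mk_le_mk.mpr (by norm_num)) (fun s hs z hz ↦ ?_) (fun s hs z hz ↦ ?_)
    (fun s hs z hz ↦ ?_) (hp (u.trans (α.trans v.symm)))
  · obtain ⟨t, ht⟩ := path_trans_apply_mem_range_left u (α.trans v.symm) hs
    have := dist_lt_or_dist_lt_of_near_geodesic (hu t) hpx (y := y) (by linarith)
      (ht ▸ hz)
    simpa [distCoordinates] using this
  · obtain ⟨t, ht⟩ := path_trans_trans_apply_mem_range_middle u α v.symm hs
    have hzt : dist z (α t) < R := ht ▸ hz
    have : c - r - R < dist p z := by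
      linarith [dist_triangle p z (α t), (abs_lt.mp (hα t)).1]
    simpa [distCoordinates] using this
  · obtain ⟨t, ht⟩ := path_trans_trans_apply_mem_range_right u α v.symm hs
    have := dist_lt_or_dist_lt_of_near_geodesic (hv (σ t)) hpy (y := x)
      (by linarith [dist_comm x y]) (ht ▸ hz)
    simpa [distCoordinates] using this

theorem macroscopic_dimension_le_one_general {X : Type*} [MetricSpace X] (hgeo : IsGeodesicSpace X)
    (p : X) {R S : ℝ} (hp : ∀ γ : Path p p, ContractsWithin R (γ : C(I, X))) (hS : 10 * R < S) :
    MacroscopicDimLE X S 1 := by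
  have hR : 0 < R := (hp (.refl p)).pos
  have := hgeo.locallyPathConnectedSpace
  refine .of_pathComponentIn (U := fun i : ℤ ↦ {z | |dist p z - i * R| < R})
    (fun i ↦ isOpen_lt (by fun_prop) continuous_const)
    (fun x ↦ ⟨_, abs_sub_floor_div_mul_lt hR (dist p x)⟩) (fun x ↦ ?_)
    fun i x _ ↦ ⟨x, 10 * R, hS, fun y hxy ↦ ?_⟩
  · exact (encard_setOf_abs_sub_intCast_mul_lt_le_two hR (dist p x)).trans_eq (by norm_num)
  · rw [mem_ball']
    linarith [dist_lt_of_joinedIn_annulus hgeo hp hxy]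

/-- **Macroscopic dimension bound.** Let `X` be a compact geodesic metric space such that
every closed curve in `X` can be contracted within its `R`-neighborhood. Then the macroscopic
dimension of `X` on scale `100 R` is at most `1`: there is a finite open cover of `X` of
multiplicity at most `2` with every member of radius less than `100 R`. -/
theorem macroscopic_dimension_le_one
    {X : Type*} [MetricSpace X] [CompactSpace X] [Nonempty X]
    (hgeo : IsGeodesicSpace X) (R : ℝ) (hR : 0 < R)
    (hcontr : ∀ γ : C(unitInterval, X), γ 0 = γ 1 →
      ∃ (H : C(unitInterval × unitInterval, X)) (x₀ : X),
        (∀ s : unitInterval, H (s, 0) = γ s) ∧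
        (∀ t : unitInterval, H (0, t) = H (1, t)) ∧
        (∀ s : unitInterval, H (s, 1) = x₀) ∧
        (∀ z : unitInterval × unitInterval, ∃ t : unitInterval, dist (H z) (γ t) < R)) :
    ∃ (k : ℕ) (V : Fin k → Set X),
      (∀ i, IsOpen (V i)) ∧ (⋃ i, V i = Set.univ) ∧
      (∀ x : X, Nat.card {i : Fin k // x ∈ V i} ≤ 2) ∧
      (∀ i, ∃ (c : X) (r : ℝ), r < 100 * R ∧ V i ⊆ Metric.ball c r) := by
  obtain ⟨p⟩ := ‹Nonempty X›
  exact (macroscopic_dimension_le_one_general hgeo p (fun γ ↦ hcontr γ (by simp))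
    (by linarith)).exists_finite_cover
end
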